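/- arXiv:2206.04842 — 2 statements merged into one kernel-verified Lean document; each statement's English description precedes it below -/
import Mathlib

section
/- For all integers n ≥ 1 and all integers d such that d ∈ {1, 2, 91, 92, 93} or d ≥ 187, one has q_d^{(3)}(n) ≥ Q_d^{(3,-)}(n). -/
/-- `q_d^{(a)}(n)`: the number of partitions of `n` into parts of size at least `a`
such that successive parts differ by at least `d`. -/
noncomputable def gapCount (d a n : ℕ) : ℕ :=
  Nat.card {p : n.Partition //
    (∀ x ∈ p.parts, a ≤ x) ∧
    List.Chain' (fun x y => x + d ≤ y) (p.parts.sort (· ≤ ·))}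

/-- `Q_d^{(a)}(n)`: the number of partitions of `n` into parts congruent to `a` or `-a`
modulo `d + 3`. -/
noncomputable def congCount (d a n : ℕ) : ℕ :=
  Nat.card {p : n.Partition //
    ∀ x ∈ p.parts, x ≡ a [MOD d + 3] ∨ x + a ≡ 0 [MOD d + 3]}

/-- `Q_d^{(a,-)}(n)`: as `congCount`, but no part equals `d + 3 - a`. -/
noncomputable def congMinusCount (d a n : ℕ) : ℕ :=
  Nat.card {p : n.Partition //
    (∀ x ∈ p.parts, x ≡ a [MOD d + 3] ∨ x + a ≡ 0 [MOD d + 3]) ∧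
    ∀ x ∈ p.parts, x ≠ d + 3 - a}

/-- `Q_d^{(a,-,-)}(n)`: as `congCount`, but no part equals `a` or `d + 3 - a`. -/
noncomputable def congMinusMinusCount (d a n : ℕ) : ℕ :=
  Nat.card {p : n.Partition //
    (∀ x ∈ p.parts, x ≡ a [MOD d + 3] ∨ x + a ≡ 0 [MOD d + 3]) ∧
    (∀ x ∈ p.parts, x ≠ a) ∧ ∀ x ∈ p.parts, x ≠ d + 3 - a}

/-- `ρ(R; n)`: the number of partitions of `n` all of whose parts lie in `R`. -/
noncomputable def rhoCount (R : Set ℕ) (n : ℕ) : ℕ :=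
  Nat.card {p : n.Partition // ∀ x ∈ p.parts, x ∈ R}

/-- `h_n^{(a)}`: the least nonnegative residue of `-n` modulo `a`,
so that `n + negRes n a = a * ⌈n/a⌉`. -/
def negRes (n a : ℕ) : ℕ := (a - n % a) % a

/-- `⌈d/a⌉` for natural numbers. -/
def cdiv (d a : ℕ) : ℕ := (d + a - 1) / a

/-!
For `d = 1` and `d = 2` the two generating functions are compared exactly. Omitting one residue from
Euler's theorem, respectively from the second Rogers–Ramanujan identity, shows that the difference
`gapCount d 3 n - congMinusCount d 3 n` is `gapCount 1 3 (n - 4)`, respectively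
`gapCount 2 2 (n - 2) - gapCount 2 4 (n - 2)`. For the Rogers–Ramanujan identity, the generating
functions of partitions into parts greater than `i` with gaps at least `2`, multiplied by
`(q; q)_∞`, and explicit theta-like sums satisfy the same three-term recurrence in `i` and have the
same limit; at `i = 1` the sum is evaluated by the Jacobi triple product. All infinite products and
sums are truncated, and the identities are read modulo powers of `X`.

For `d ≥ 91` both sides are estimated on the interval `j (j + 2) d ≤ n < (j + 1) (j + 3) d`. There
`j` parts can be chosen successively, each in a window of `90` consecutive values, and completed by
a last part, so the gap side is at least `90 ^ j`. On the congruence side the allowed parts near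
`i d` are replaced by `i d`, and Rankin's method bounds the resulting number of partitions by
`exp ((2 + π ^ 2 / 6) (j + 2))`, which is below `90 ^ j` once `9 ≤ j`.
-/

/-! ### Removing one part from a partition -/

/-- The multisets counted by `gapCount`: all elements are at least `a` and distinct positions
differ by at least `d`. The gap condition is imposed on all pairs of the sorted list, not only on
neighbours, so that it passes to submultisets. -/
def HasGap (d a : ℕ) (s : Multiset ℕ) : Prop :=
  (∀ x ∈ s, a ≤ x) ∧ (s.sort (· ≤ ·)).Pairwise fun x y => x + d ≤ y

theorem HasGap.mono {d a b : ℕ} {s : Multiset ℕ} (hab : a ≤ b) (h : HasGap d b s) :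
    HasGap d a s :=
  ⟨fun x hx => hab.trans (h.1 x hx), h.2⟩

theorem hasGap_zero (d a : ℕ) : HasGap d a 0 := by
  simp [HasGap]

theorem hasGap_singleton {d a b : ℕ} : HasGap d a {b} ↔ a ≤ b := by
  simp [HasGap]

theorem hasGap_cons_iff {d a : ℕ} {s : Multiset ℕ} :
    HasGap d a (a ::ₘ s) ↔ HasGap d (a + d) s := by
  simp only [HasGap, Multiset.mem_cons, forall_eq_or_imp, le_refl, true_and]
  have key (h : ∀ x ∈ s, a ≤ x) : (((a ::ₘ s).sort (· ≤ ·)).Pairwise fun x y => x + d ≤ y) ↔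
      (∀ x ∈ s, a + d ≤ x) ∧ (s.sort (· ≤ ·)).Pairwise fun x y => x + d ≤ y := by
    simp [Multiset.sort_cons a s (· ≤ ·) h]
  constructor
  · rintro ⟨h, h'⟩
    exact (key h).1 h'
  · intro h
    have ha : ∀ x ∈ s, a ≤ x := fun x hx => (Nat.le_add_right a d).trans (h.1 x hx)
    exact ⟨ha, (key ha).2 h⟩

theorem gapCount_eq_card_hasGap (d a n : ℕ) :
    gapCount d a n = Nat.card {p : n.Partition // HasGap d a p.parts} := by
  have : IsTrans ℕ fun x y => x + d ≤ y := ⟨fun x y z _ _ => by omega⟩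
  exact Nat.card_congr (Equiv.subtypeEquivRight fun p =>
    and_congr_right fun _ => List.isChain_iff_pairwise)

theorem congMinusCount_eq_rhoCount (d a n : ℕ) : congMinusCount d a n =
    rhoCount {x | (x ≡ a [MOD d + 3] ∨ x + a ≡ 0 [MOD d + 3]) ∧ x ≠ d + 3 - a} n :=
  Nat.card_congr (Equiv.subtypeEquivRight fun _ => forall₂_and.symm)

theorem card_partition_le_of_imp {n : ℕ} {P Q : n.Partition → Prop} (h : ∀ p, P p → Q p) :
    Nat.card {p // P p} ≤ Nat.card {p // Q p} :=
  Nat.card_le_card_of_injective _ (Subtype.map_injective h Function.injective_id)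

theorem card_partition_eq_add {n b : ℕ} (hb : 1 ≤ b) (hbn : b ≤ n) (P : Multiset ℕ → Prop) :
    Nat.card {p : n.Partition // P p.parts} =
      Nat.card {p : n.Partition // P p.parts ∧ b ∉ p.parts} +
        Nat.card {p : (n - b).Partition // P (b ::ₘ p.parts)} := by
  classical
  have e₁ : {p : {p : n.Partition // b ∈ p.parts} // P p.1.parts} ≃
      {p : (n - b).Partition // P (b ::ₘ p.parts)} :=
    Equiv.subtypeEquiv (Nat.Partition.partitionWithPartEquiv hb hbn) fun p => by
      rw [Nat.Partition.partitionWithPartEquiv_apply_parts, Multiset.cons_erase p.2]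
  have e₂ : {p : {p : n.Partition // b ∈ p.parts} // P p.1.parts} ≃
      {p : n.Partition // P p.parts ∧ b ∈ p.parts} :=
    (Equiv.subtypeSubtypeEquivSubtypeInter (fun p : n.Partition => b ∈ p.parts)
      fun p => P p.parts).trans (Equiv.subtypeEquivRight fun _ => and_comm)
  rw [← Nat.card_congr e₁, Nat.card_congr e₂, add_comm]
  simp only [Nat.card_eq_fintype_card, Fintype.card_subtype, ← Finset.filter_filter]
  exact (Finset.card_filter_add_card_filter_not _).symm

theorem rhoCount_mono {R S : Set ℕ} {n : ℕ} (h : ∀ x ∈ R, x ≤ n → x ∈ S) :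
    rhoCount R n ≤ rhoCount S n :=
  card_partition_le_of_imp fun _ hp x hx => h x (hp x hx) (Nat.Partition.le_of_mem_parts hx)

theorem rhoCount_zero (S : Set ℕ) : rhoCount S 0 = 1 := by
  rw [rhoCount, Nat.card_eq_one_iff_unique]
  exact ⟨inferInstance, ⟨default, by simp⟩⟩

theorem parts_ne_zero {n : ℕ} (hn : n ≠ 0) (p : n.Partition) : p.parts ≠ 0 := fun h =>
  hn (by rw [← p.parts_sum, h, Multiset.sum_zero])

theorem rhoCount_eq_zero {S : Set ℕ} {n : ℕ} (hn : n ≠ 0) (h : ∀ x ∈ S, n < x) :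
    rhoCount S n = 0 := by
  rw [rhoCount, Nat.card_eq_zero]
  refine Or.inl ⟨fun ⟨p, hp⟩ => ?_⟩
  obtain ⟨x, hx⟩ := Multiset.exists_mem_of_ne_zero (parts_ne_zero hn p)
  exact (h x (hp x hx)).not_ge (Nat.Partition.le_of_mem_parts hx)

theorem rhoCount_eq_add {S : Set ℕ} {b n : ℕ} (hbS : b ∈ S) (hb : 1 ≤ b) (hbn : b ≤ n) :
    rhoCount S n = rhoCount (S \ {b}) n + rhoCount S (n - b) := by
  rw [rhoCount, card_partition_eq_add hb hbn fun s => ∀ x ∈ s, x ∈ S]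
  congr 1 <;> refine Nat.card_congr (Equiv.subtypeEquivRight fun p => ?_)
  · simp only [Set.mem_sdiff, Set.mem_singleton_iff, forall₂_and]
    exact and_congr_right fun _ => ⟨fun h x hx hxb => h (hxb ▸ hx), fun h hx => h b hx rfl⟩
  · simp [hbS]

theorem rhoCount_sdiff_singleton_of_lt {S : Set ℕ} {b n : ℕ} (hnb : n < b) :
    rhoCount (S \ {b}) n = rhoCount S n :=
  le_antisymm (rhoCount_mono fun _ hx _ => hx.1)
    (rhoCount_mono fun _ hx hxn => ⟨hx, (hxn.trans_lt hnb).ne⟩)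

theorem rhoCount_insert_le_of_lt {S : Set ℕ} {b n : ℕ} (hnb : n < b) :
    rhoCount (insert b S) n ≤ rhoCount S n :=
  rhoCount_mono fun _ hx hxn => hx.resolve_left (hxn.trans_lt hnb).ne

theorem rhoCount_insert_le_add {S : Set ℕ} {b n : ℕ} (hb : 1 ≤ b) (hbn : b ≤ n) :
    rhoCount (insert b S) n ≤ rhoCount S n + rhoCount (insert b S) (n - b) := by
  rw [rhoCount_eq_add (Set.mem_insert b S) hb hbn]
  exact Nat.add_le_add_right (rhoCount_mono fun _ hx _ => hx.1.resolve_left hx.2) _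

theorem rhoCount_singleton_le_one {b : ℕ} (hb : 1 ≤ b) (n : ℕ) : rhoCount {b} n ≤ 1 := by
  induction n using Nat.strong_induction_on with
  | _ n ih =>
    rcases Nat.eq_zero_or_pos n with rfl | hn
    · rw [rhoCount_zero]
    rcases lt_or_ge n b with hnb | hbn
    · rw [rhoCount_eq_zero hn.ne' (by simpa using hnb)]
      exact zero_le_one
    · rw [rhoCount_eq_add (Set.mem_singleton b) hb hbn, Set.sdiff_self,
        rhoCount_eq_zero hn.ne' (by simp), zero_add]
      exact ih _ (by omega)

theorem gapCount_antitone (d n : ℕ) : Antitone fun a => gapCount d a n := fun a b hab => by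
  simp only [gapCount_eq_card_hasGap]
  exact card_partition_le_of_imp fun _ => HasGap.mono hab

theorem gapCount_zero (d a : ℕ) : gapCount d a 0 = 1 := by
  rw [gapCount_eq_card_hasGap, Nat.card_eq_one_iff_unique]
  exact ⟨inferInstance, ⟨default, hasGap_zero d a⟩⟩

theorem gapCount_pos {d a n : ℕ} (hn : n ≠ 0) (han : a ≤ n) : 1 ≤ gapCount d a n := by
  rw [gapCount_eq_card_hasGap]
  have : Nonempty {p : n.Partition // HasGap d a p.parts} :=
    ⟨Nat.Partition.indiscrete n, by rwa [Nat.Partition.indiscrete_parts hn, hasGap_singleton]⟩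
  exact Nat.card_pos

theorem gapCount_eq_zero {d a n : ℕ} (hn : n ≠ 0) (han : n < a) : gapCount d a n = 0 := by
  rw [gapCount_eq_card_hasGap, Nat.card_eq_zero]
  refine Or.inl ⟨fun ⟨p, hp⟩ => ?_⟩
  obtain ⟨x, hx⟩ := Multiset.exists_mem_of_ne_zero (parts_ne_zero hn p)
  exact (han.trans_le (hp.1 x hx)).not_ge (Nat.Partition.le_of_mem_parts hx)

theorem gapCount_succ_of_lt {d a n : ℕ} (hna : n < a) :
    gapCount d (a + 1) n = gapCount d a n := by
  rcases eq_or_ne n 0 with rfl | hn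
  · rw [gapCount_zero, gapCount_zero]
  · rw [gapCount_eq_zero hn hna, gapCount_eq_zero hn (by omega)]

theorem gapCount_eq_add {d a n : ℕ} (ha : 1 ≤ a) (han : a ≤ n) :
    gapCount d a n = gapCount d (a + 1) n + gapCount d (a + d) (n - a) := by
  simp only [gapCount_eq_card_hasGap]
  rw [card_partition_eq_add ha han]
  congr 1 <;> refine Nat.card_congr (Equiv.subtypeEquivRight fun p => ?_)
  · constructor
    · rintro ⟨h, hap⟩
      exact ⟨fun x hx => lt_of_le_of_ne (h.1 x hx) fun hax => hap (hax ▸ hx), h.2⟩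
    · intro h
      exact ⟨h.mono a.le_succ, fun hap => a.not_succ_le_self (h.1 a hap)⟩
  · exact hasGap_cons_iff

theorem rhoCount_singleton_le_gapCount {a : ℕ} (ha : 1 ≤ a) (d n : ℕ) :
    rhoCount {a} n ≤ gapCount d a n := by
  rcases eq_or_ne n 0 with rfl | hn
  · rw [rhoCount_zero, gapCount_zero]
  rcases lt_or_ge n a with hna | han
  · rw [rhoCount_eq_zero hn (by simpa using hna)]
    exact Nat.zero_le _
  · exact (rhoCount_singleton_le_one ha n).trans (gapCount_pos hn han)

/-! ### Generating functions -/

section GeneratingFunctions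

open PowerSeries

/-- The generating function of `rhoCount S`. -/
noncomputable def rhoSeries (S : Set ℕ) : ℤ⟦X⟧ := .mk fun n => rhoCount S n

/-- The generating function of `gapCount d a`. -/
noncomputable def gapSeries (d a : ℕ) : ℤ⟦X⟧ := .mk fun n => gapCount d a n

theorem one_sub_X_pow_mul_rhoSeries {S : Set ℕ} {b : ℕ} (hbS : b ∈ S) (hb : 1 ≤ b) :
    (1 - X ^ b) * rhoSeries S = rhoSeries (S \ {b}) := by
  ext n
  rw [sub_mul, one_mul, map_sub, coeff_X_pow_mul']
  simp only [rhoSeries, coeff_mk]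
  split_ifs with hbn
  · rw [rhoCount_eq_add hbS hb hbn, Nat.cast_add, add_sub_cancel_right]
  · rw [sub_zero, rhoCount_sdiff_singleton_of_lt (not_le.1 hbn)]

theorem X_pow_dvd_rhoSeries_sub_one {S : Set ℕ} {n : ℕ} (h : ∀ x ∈ S, n ≤ x) :
    X ^ n ∣ rhoSeries S - 1 := by
  refine X_pow_dvd_iff.2 fun m hm => ?_
  rw [map_sub, rhoSeries, coeff_mk, coeff_one]
  split_ifs with h0
  · simp [h0, rhoCount_zero]
  · simp [rhoCount_eq_zero h0 fun x hx => hm.trans_le (h x hx)]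

theorem gapSeries_eq_add {a : ℕ} (ha : 1 ≤ a) (d : ℕ) :
    gapSeries d a = gapSeries d (a + 1) + X ^ a * gapSeries d (a + d) := by
  ext n
  rw [map_add, coeff_X_pow_mul']
  simp only [gapSeries, coeff_mk]
  split_ifs with han
  · rw [gapCount_eq_add ha han, Nat.cast_add]
  · rw [add_zero, gapCount_succ_of_lt (not_le.1 han)]

theorem X_pow_dvd_gapSeries_sub_one (d a : ℕ) : X ^ a ∣ gapSeries d a - 1 := by
  refine X_pow_dvd_iff.2 fun m hm => ?_
  rw [map_sub, gapSeries, coeff_mk, coeff_one]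
  split_ifs with h0
  · simp [h0, gapCount_zero]
  · simp [gapCount_eq_zero h0 hm]

/-! ### Gap one: Euler's theorem -/

theorem rhoCount_not_even (n : ℕ) : rhoCount {x | ¬ Even x} n = (Nat.Partition.odds n).card :=
  Nat.subtype_card _ (by simp [Nat.Partition.odds, Nat.Partition.restricted])

theorem gapCount_one_one (n : ℕ) : gapCount 1 1 n = (Nat.Partition.distincts n).card := by
  rw [gapCount_eq_card_hasGap]
  refine Nat.subtype_card _ fun p => ?_
  have hpos : ∀ x ∈ p.parts, 1 ≤ x := fun _ => p.parts_pos
  have hsort : (p.parts.sort (· ≤ ·)).SortedLE := (p.parts.pairwise_sort (· ≤ ·)).sortedLE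
  simp only [Nat.Partition.distincts, Finset.mem_filter, Finset.mem_univ, true_and]
  calc p.parts.Nodup ↔ (p.parts.sort (· ≤ ·)).Nodup := by
        rw [← Multiset.coe_nodup, Multiset.sort_eq]
    _ ↔ (p.parts.sort (· ≤ ·)).SortedLT := by
        rw [List.sortedLT_iff_nodup_and_sortedLE, and_iff_left hsort]
    _ ↔ HasGap 1 1 p.parts := by
        rw [List.sortedLT_iff_pairwise, HasGap, and_iff_right hpos]
        rfl

theorem rhoSeries_not_even : rhoSeries {x | ¬ Even x} = gapSeries 1 1 := by
  ext n
  simp only [rhoSeries, gapSeries, coeff_mk, rhoCount_not_even, gapCount_one_one,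
    Nat.Partition.card_odds_eq_card_distincts]

theorem rhoSeries_not_even_sdiff_one :
    rhoSeries ({x | ¬ Even x} \ {1}) = (1 - X ^ 4) * gapSeries 1 3 := by
  rw [← one_sub_X_pow_mul_rhoSeries (by simp) le_rfl, rhoSeries_not_even,
    gapSeries_eq_add le_rfl, one_add_one_eq_two, gapSeries_eq_add one_le_two]
  ring

theorem congMinusCount_le_gapCount_one (n : ℕ) : congMinusCount 1 3 n ≤ gapCount 1 3 n := by
  have hset : {x | (x ≡ 3 [MOD 1 + 3] ∨ x + 3 ≡ 0 [MOD 1 + 3]) ∧ x ≠ 1 + 3 - 3} =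
      {x : ℕ | ¬ Even x} \ {1} := by
    ext x
    simp only [Nat.ModEq, Set.mem_ofPred_eq, Set.mem_sdiff, Set.mem_singleton_iff, Nat.even_iff]
    omega
  have hcoeff := congrArg (coeff n) rhoSeries_not_even_sdiff_one
  rw [sub_mul, one_mul, map_sub, coeff_X_pow_mul'] at hcoeff
  simp only [rhoSeries, gapSeries, coeff_mk] at hcoeff
  rw [congMinusCount_eq_rhoCount, hset]
  split_ifs at hcoeff <;> omega

end GeneratingFunctions

/-! ### The Jacobi triple product modulo powers of `X` -/

section QSeries

open Finset

variable {R : Type*} [CommRing R]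

/-- The `q`-Pochhammer symbol `(a; q)_n`, the truncation to `n` factors of the infinite products
on the product side of the partition identities. -/
def qPoch (a q : R) (n : ℕ) : R := ∏ i ∈ range n, (1 - a * q ^ i)

/-- The Gaussian binomial coefficient with base `q`, defined by a `q`-Pascal rule so that no
division is needed. -/
def qBinom (q : R) : ℕ → ℕ → R
  | _, 0 => 1
  | 0, _ + 1 => 0
  | m + 1, k + 1 => q ^ (k + 1) * qBinom q m (k + 1) + qBinom q m k

theorem qPoch_zero (a q : R) : qPoch a q 0 = 1 := prod_range_zero _

theorem qPoch_succ (a q : R) (n : ℕ) : qPoch a q (n + 1) = qPoch a q n * (1 - a * q ^ n) :=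
  prod_range_succ _ n

theorem qPoch_succ_left (a q : R) (n : ℕ) : qPoch a q (n + 1) = (1 - a) * qPoch (a * q) q n := by
  rw [qPoch, prod_range_succ', mul_comm, pow_zero, mul_one, qPoch]
  simp only [pow_succ', mul_assoc]

theorem qPoch_mul (a q : R) (c n : ℕ) :
    qPoch a q (c * n) = ∏ i ∈ range c, qPoch (a * q ^ i) (q ^ c) n := by
  induction n with
  | zero => simp [qPoch_zero]
  | succ n ih =>
    simp only [qPoch_succ, prod_mul_distrib, ← ih]
    rw [qPoch, mul_add_one, prod_range_add, ← qPoch]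
    congr 1
    refine prod_congr rfl fun i _ => ?_
    ring

theorem dvd_qPoch_sub_qPoch (a q : R) {m n : ℕ} (hmn : m ≤ n) :
    a * q ^ m ∣ qPoch a q n - qPoch a q m := by
  induction n, hmn using Nat.le_induction with
  | base => simp
  | succ n hmn ih =>
    rw [qPoch_succ, mul_one_sub, sub_right_comm]
    exact dvd_sub ih (Dvd.dvd.mul_left (mul_dvd_mul_left a (pow_dvd_pow q hmn)) _)

theorem qBinom_zero_right (q : R) (m : ℕ) : qBinom q m 0 = 1 := by
  cases m <;> rfl

theorem qBinom_eq_zero_of_lt (q : R) {m k : ℕ} (h : m < k) : qBinom q m k = 0 := by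
  induction m generalizing k with
  | zero => cases k with
    | zero => exact absurd h (lt_irrefl 0)
    | succ k => rfl
  | succ m ih => cases k with
    | zero => exact absurd h (Nat.not_lt_zero _)
    | succ k => simp [qBinom, ih (Nat.lt_of_succ_lt_succ h), ih (Nat.lt_of_succ_lt h)]

theorem qBinom_self (q : R) (m : ℕ) : qBinom q m m = 1 := by
  induction m with
  | zero => rfl
  | succ m ih => simp [qBinom, ih, qBinom_eq_zero_of_lt q m.lt_succ_self]

theorem qBinom_mul_qPoch (q : R) (k l : ℕ) :
    qBinom q (k + l) k * (qPoch q q k * qPoch q q l) = qPoch q q (k + l) := by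
  induction k generalizing l with
  | zero => simp [qBinom_zero_right, qPoch_zero]
  | succ k ihk =>
    induction l with
    | zero => simp [qBinom_self, qPoch_zero]
    | succ l ihl =>
      have h := ihk (l + 1)
      rw [show k + (l + 1) = k + 1 + l by ring] at h
      rw [← add_assoc, qBinom, qPoch_succ q q (k + 1 + l)]
      rw [qPoch_succ q q k, qPoch_succ q q l] at *
      linear_combination q ^ (k + 1) * (1 - q * q ^ l) * ihl + (1 - q * q ^ k) * h

/-- The homogeneous form of the `q`-binomial theorem. -/
theorem prod_add_mul_pow_eq_sum_qBinom (q s t : R) (m : ℕ) :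
    ∏ i ∈ range m, (s + t * q ^ i) =
      ∑ k ∈ range (m + 1), q ^ k.choose 2 * qBinom q m k * t ^ k * s ^ (m - k) := by
  induction m generalizing t with
  | zero => simp [qBinom]
  | succ m ih =>
    set f : ℕ → R := fun k => q ^ (k.choose 2 + k) * qBinom q m k * t ^ k * s ^ (m + 1 - k) with hf
    set g : ℕ → R := fun k => q ^ (k.choose 2 + k) * qBinom q m k * t ^ (k + 1) * s ^ (m - k)
    have hprod : ∏ i ∈ range (m + 1), (s + t * q ^ i) =
        ∑ k ∈ range (m + 1), f k + ∑ k ∈ range (m + 1), g k := by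
      rw [prod_range_succ', mul_comm, pow_zero, mul_one, ← sum_add_distrib]
      simp only [pow_succ', ← mul_assoc t q]
      rw [ih, mul_sum]
      refine sum_congr rfl fun k hk => ?_
      simp only [f, g, Nat.succ_sub (mem_range_succ_iff.1 hk), Nat.succ_eq_add_one]
      ring
    have hf_succ : ∑ k ∈ range (m + 1), f k = ∑ k ∈ range (m + 1), f (k + 1) + s ^ (m + 1) := by
      rw [← add_zero (∑ k ∈ range (m + 1), f k),
        show (0 : R) = f (m + 1) by simp [hf, qBinom_eq_zero_of_lt q m.lt_succ_self],
        ← sum_range_succ, sum_range_succ']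
      simp [hf, qBinom_zero_right]
    rw [hprod, hf_succ, sum_range_succ' _ (m + 1), add_right_comm, ← sum_add_distrib]
    congr 1
    · refine sum_congr rfl fun k _ => ?_
      simp only [f, g, Nat.add_sub_add_right, qBinom, Nat.choose_succ_succ' k 1,
        Nat.choose_one_right]
      ring
    · simp [qBinom_zero_right]

theorem pow_dvd_qPoch_mul_qBinom_sub_one {q : R} (hq : ∀ m, IsUnit (qPoch q q m)) {k l m n : ℕ}
    (hk : m ≤ k) (hl : m ≤ l) (hn : m ≤ n) :
    q ^ (m + 1) ∣ qPoch q q n * qBinom q (k + l) k - 1 := by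
  have dvd_sub {i j : ℕ} (hi : m ≤ i) (hj : m ≤ j) : q ^ (m + 1) ∣ qPoch q q i - qPoch q q j := by
    rw [pow_succ', ← sub_sub_sub_cancel_right _ _ (qPoch q q m)]
    exact _root_.dvd_sub (dvd_qPoch_sub_qPoch q q hi) (dvd_qPoch_sub_qPoch q q hj)
  refine ((hq k).mul (hq l)).dvd_mul_right.1 ?_
  rw [sub_mul, one_mul, mul_assoc, qBinom_mul_qPoch]
  exact dvd_mul_sub_mul (dvd_sub hn hk) (dvd_sub (hk.trans (k.le_add_right l)) hl)

theorem choose_two_add (a b : ℕ) : (a + b).choose 2 = a.choose 2 + b.choose 2 + a * b := by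
  induction b with
  | zero => simp
  | succ b ih =>
    rw [← add_assoc, Nat.choose_succ_succ' (a + b) 1, ih, Nat.choose_succ_succ' b 1]
    simp only [Nat.choose_one_right]
    ring

theorem prod_sub_mul_pow (x y : R) (n : ℕ) :
    ∏ i ∈ range (2 * n), (y * (x * y) ^ n + -(x * y) * (x * y) ^ i) =
      (-1) ^ n * (x * y) ^ ((n + 1).choose 2 + n * n) * y ^ n *
        (qPoch x (x * y) n * qPoch y (x * y) n) := by
  set q := x * y with hq
  have hlow : ∏ i ∈ range n, (y * q ^ n + -q * q ^ i) =
      (-1) ^ n * q ^ (n + 1).choose 2 * qPoch y q n := by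
    calc ∏ i ∈ range n, (y * q ^ n + -q * q ^ i)
        = ∏ i ∈ range n, (-1 * q ^ (i + 1)) * (1 - y * q ^ (n - 1 - i)) := by
          refine prod_congr rfl fun i hi => ?_
          obtain ⟨t, rfl⟩ := Nat.exists_eq_add_of_lt (mem_range.1 hi)
          rw [show i + t + 1 - 1 - i = t by omega]
          ring
      _ = _ := by
          have hsum : ∑ i ∈ range n, (i + 1) = (n + 1).choose 2 := by
            rw [Nat.choose_two_right, ← sum_range_id, sum_range_succ', add_zero]
          rw [prod_mul_distrib, prod_mul_distrib, prod_const, card_range, prod_pow_eq_pow_sum,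
            prod_range_reflect (fun i => 1 - y * q ^ i), hsum, qPoch]
  have hhigh : ∏ i ∈ range n, (y * q ^ n + -q * q ^ (n + i)) =
      (y * q ^ n) ^ n * qPoch x q n := by
    calc ∏ i ∈ range n, (y * q ^ n + -q * q ^ (n + i))
        = ∏ i ∈ range n, (y * q ^ n) * (1 - x * q ^ i) :=
          prod_congr rfl fun i _ => by
            rw [hq]
            ring
      _ = _ := by rw [prod_mul_distrib, prod_const, card_range, qPoch]
  rw [two_mul, prod_range_add, hlow, hhigh]
  ring

theorem sum_range_two_mul_add_one {M : Type*} [AddCommMonoid M] (f : ℕ → M) (n : ℕ) :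
    ∑ k ∈ range (2 * n + 1), f k =
      ∑ j ∈ range (n + 1), f (n + j) + ∑ j ∈ range n, f (n - (j + 1)) := by
  rw [show 2 * n + 1 = n + (n + 1) by ring, sum_range_add, add_comm, ← sum_range_reflect f n]
  simp only [Nat.sub_sub, add_comm 1]

theorem choose_two_add_add_mul (t k : ℕ) : t.choose 2 + t + (t + k) * (t + k + k) =
    (t + k + 1).choose 2 + (t + k) * (t + k) + k.choose 2 := by
  have htwo : 2 * k.choose 2 + k = k * k := by
    rw [Nat.choose_two_right, Nat.mul_div_cancel' (Nat.even_mul_pred_self k).two_dvd,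
      ← Nat.mul_succ, Nat.succ_eq_add_one]
    cases k <;> simp
  rw [choose_two_add _ 1, choose_two_add t, Nat.choose_succ_self]
  linarith

/-- The finite triple product, the form of the Jacobi triple product due to Cauchy and Gauss. -/
theorem qPoch_mul_qPoch_eq_sum [IsDomain R] {x y : R} (hx : x ≠ 0) (hy : y ≠ 0) (n : ℕ) :
    qPoch x (x * y) n * qPoch y (x * y) n =
      ∑ j ∈ range (n + 1),
        (-1) ^ j * x ^ j * (x * y) ^ j.choose 2 * qBinom (x * y) (2 * n) (n + j) +
      ∑ j ∈ range n, (-1) ^ (j + 1) * y ^ (j + 1) * (x * y) ^ (j + 1).choose 2 *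
        qBinom (x * y) (2 * n) (n - (j + 1)) := by
  set q := x * y with hq
  have hq0 : q ≠ 0 := mul_ne_zero hx hy
  have hc : (-1) ^ n * q ^ ((n + 1).choose 2 + n * n) * y ^ n ≠ 0 := by
    simp [hq0, hy]
  refine mul_left_cancel₀ hc ?_
  rw [hq, ← prod_sub_mul_pow, ← hq, prod_add_mul_pow_eq_sum_qBinom, sum_range_two_mul_add_one,
    mul_add, mul_sum, mul_sum]
  congr 1
  · refine sum_congr rfl fun j hj => ?_
    obtain ⟨t, rfl⟩ := Nat.exists_eq_add_of_le (mem_range_succ_iff.1 hj)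
    have hexp : (j + t + j).choose 2 + (j + t + j) + (j + t) * t =
        (j + t + 1).choose 2 + (j + t) * (j + t) + j.choose 2 + j := by
      rw [choose_two_add _ j, choose_two_add _ 1, Nat.choose_succ_self]
      ring
    rw [show 2 * (j + t) - (j + t + j) = t by omega]
    calc _ = (-1) ^ (j + t + j) * q ^ ((j + t + j).choose 2 + (j + t + j) + (j + t) * t) * y ^ t *
          qBinom q (2 * (j + t)) (j + t + j) := by ring
      _ = _ := by
        rw [hexp, pow_add q _ j, hq, mul_pow x y j]
        ring
  · refine sum_congr rfl fun j hj => ?_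
    obtain ⟨t, rfl⟩ := Nat.exists_eq_add_of_le' (show j + 1 ≤ n from mem_range.1 hj)
    generalize j + 1 = k
    have hsign : (-1 : R) ^ (t + k) * (-1) ^ k = (-1) ^ t := by
      rw [pow_add, mul_assoc, ← mul_pow, neg_one_mul, neg_neg, one_pow, mul_one]
    rw [Nat.add_sub_cancel, show 2 * (t + k) - t = t + k + k by omega]
    calc _ = (-1) ^ t * q ^ (t.choose 2 + t + (t + k) * (t + k + k)) * y ^ (t + k + k) *
          qBinom q (2 * (t + k)) t := by ring
      _ = _ := by
        rw [choose_two_add_add_mul, ← hsign]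
        ring

theorem sum_mul_one_sub_pow_eq (x y : R) (n : ℕ) :
    ∑ r ∈ range n, (-1) ^ r * y ^ r * (x * y) ^ r.choose 2 * (1 - x ^ (2 * r + 1)) =
      ∑ j ∈ range (n + 1), (-1) ^ j * x ^ j * (x * y) ^ j.choose 2 +
        ∑ j ∈ range n, (-1) ^ (j + 1) * y ^ (j + 1) * (x * y) ^ (j + 1).choose 2 -
        (-1) ^ n * y ^ n * (x * y) ^ n.choose 2 := by
  induction n with
  | zero => simp
  | succ n ih =>
    simp only [sum_range_succ, Nat.choose_succ_succ' n 1, Nat.choose_one_right] at ih ⊢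
    linear_combination ih

/-- The Jacobi triple product modulo `z ^ n`. -/
theorem pow_dvd_qPoch_mul_sub_sum [IsDomain R] {x y z : R} (hx : x ≠ 0) (hy : y ≠ 0)
    (hzx : z ∣ x) (hzy : z ∣ y) (hunit : ∀ m, IsUnit (qPoch (x * y) (x * y) m)) (n : ℕ) :
    z ^ n ∣ qPoch (x * y) (x * y) n * (qPoch x (x * y) n * qPoch y (x * y) n) -
      ∑ r ∈ range n, (-1) ^ r * y ^ r * (x * y) ^ r.choose 2 * (1 - x ^ (2 * r + 1)) := by
  have dvd_term {w : R} (hw : z ∣ w) {j k l : ℕ} (hk : n - j ≤ k) (hl : n - j ≤ l)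
      (hkl : k + l = 2 * n) : z ^ n ∣
        w ^ j * (qPoch (x * y) (x * y) n * qBinom (x * y) (2 * n) k - 1) := by
    refine (pow_dvd_pow z (show n ≤ j + (n - j + 1) by omega)).trans ?_
    rw [pow_add, ← hkl]
    exact mul_dvd_mul (pow_dvd_pow_of_dvd hw j)
      ((pow_dvd_pow_of_dvd (hzx.mul_right y) _).trans
        (pow_dvd_qPoch_mul_qBinom_sub_one hunit hk hl (n.sub_le j)))
  rw [sum_mul_one_sub_pow_eq, qPoch_mul_qPoch_eq_sum hx hy, mul_add, mul_sum, mul_sum,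
    sub_sub_eq_add_sub, add_sub_right_comm, add_sub_add_comm, ← sum_sub_distrib, ← sum_sub_distrib]
  refine dvd_add (dvd_add (dvd_sum fun j hj => ?_) (dvd_sum fun j hj => ?_)) ?_
  · rw [mem_range] at hj
    convert (dvd_term hzx (j := j) (k := n + j) (l := n - j) (by omega) le_rfl
      (by omega)).mul_left ((-1) ^ j * (x * y) ^ j.choose 2) using 1
    ring
  · rw [mem_range] at hj
    convert (dvd_term hzy (j := j + 1) (k := n - (j + 1)) (l := n + (j + 1)) le_rfl (by omega)
      (by omega)).mul_left ((-1) ^ (j + 1) * (x * y) ^ (j + 1).choose 2) using 1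
    ring
  · exact ((pow_dvd_pow_of_dvd hzy n).mul_left _).mul_right _

/-! ### Gap two: the second Rogers–Ramanujan identity -/

theorem dvd_of_dvd_sub_sub_mul {z : R} {F c : ℕ → R} {d n : ℕ} (hd : 1 ≤ d)
    (hrec : ∀ i, z ∣ F i - F (i + 1) - c i * F (i + d)) (hlarge : ∀ i, n ≤ i → z ∣ F i) (i : ℕ) :
    z ∣ F i := by
  induction hk : n - i using Nat.strong_induction_on generalizing i with
  | _ k ih =>
    rcases le_or_gt n i with hi | hi
    · exact hlarge i hi
    have h₁ := ih _ (by omega) (i + 1) rfl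
    have h₂ := ih _ (by omega) (i + d) rfl
    have h := hrec i
    rwa [sub_sub, dvd_sub_left (dvd_add h₁ (h₂.mul_left (c i)))] at h

/-- The partial sums of the series expressing the product of `(q; q)_∞` with the generating
function of the partitions into parts greater than `i` with gaps at least `2`. -/
def gapTheta (q : R) (n i : ℕ) : R :=
  ∑ r ∈ range n, (-1) ^ r * q ^ ((2 * i + 3) * r + 5 * r.choose 2) *
    (1 - q ^ (2 * i + 2 + 4 * r)) * qPoch (q ^ (r + 1)) q i

/-- The partial sums of the auxiliary series through which `gapTheta` at `i` is related to its
values at `i + 1` and `i + 2`. -/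
def gapThetaAux (q : R) (n i : ℕ) : R :=
  ∑ r ∈ range n, (-1) ^ r * q ^ ((2 * i + 4) * r + 5 * r.choose 2) *
    (1 - q ^ (i + 1 + 2 * r)) * qPoch (q ^ (r + 1)) q i

theorem one_sub_mul_qPoch_mul (a q : R) (n : ℕ) :
    (1 - a) * qPoch (a * q) q n = qPoch a q n * (1 - a * q ^ n) := by
  rw [← qPoch_succ_left, qPoch_succ]

theorem gapTheta_sub (q : R) (n i : ℕ) :
    gapTheta q n i - gapThetaAux q n i - q ^ (i + 1) * gapThetaAux q n (i + 1) =
      -((-1) ^ n * q ^ ((2 * i + 3) * n + 5 * n.choose 2) * (1 - q ^ n) *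
        qPoch (q ^ (n + 1)) q i) := by
  induction n with
  | zero => simp [gapTheta, gapThetaAux]
  | succ n ih =>
    have h := one_sub_mul_qPoch_mul (q ^ (n + 1)) q i
    rw [← pow_succ] at h
    simp only [gapTheta, gapThetaAux, sum_range_succ, Nat.choose_succ_succ' n 1,
      Nat.choose_one_right, qPoch_succ _ q i] at ih ⊢
    linear_combination ih + (-1) ^ (n + 1) * q ^ ((2 * i + 3) * (n + 1) + 5 * (n + n.choose 2)) * h

theorem gapThetaAux_sub (q : R) (n i : ℕ) :
    gapThetaAux q n i - gapTheta q n (i + 1) =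
      -((-1) ^ n * q ^ ((2 * i + 4) * n + 5 * n.choose 2) * (1 - q ^ n) *
        qPoch (q ^ (n + 1)) q i) := by
  induction n with
  | zero => simp [gapTheta, gapThetaAux]
  | succ n ih =>
    have h := one_sub_mul_qPoch_mul (q ^ (n + 1)) q i
    rw [← pow_succ] at h
    simp only [gapTheta, gapThetaAux, sum_range_succ, Nat.choose_succ_succ' n 1,
      Nat.choose_one_right, qPoch_succ _ q i] at ih ⊢
    linear_combination ih + (-1) ^ (n + 1) * q ^ ((2 * i + 4) * (n + 1) + 5 * (n + n.choose 2)) * h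

theorem pow_dvd_gapThetaAux_sub (q : R) (n i : ℕ) :
    q ^ n ∣ gapThetaAux q n i - gapTheta q n (i + 1) := by
  rw [gapThetaAux_sub, dvd_neg]
  refine Dvd.dvd.mul_right (Dvd.dvd.mul_right (Dvd.dvd.mul_left (pow_dvd_pow q ?_) _) _) _
  nlinarith

theorem pow_dvd_gapTheta_sub (q : R) (n i : ℕ) :
    q ^ n ∣ gapTheta q n i - gapTheta q n (i + 1) - q ^ (i + 1) * gapTheta q n (i + 2) := by
  have h₁ : q ^ n ∣ gapTheta q n i - gapThetaAux q n i - q ^ (i + 1) * gapThetaAux q n (i + 1) := by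
    rw [gapTheta_sub, dvd_neg]
    refine Dvd.dvd.mul_right (Dvd.dvd.mul_right (Dvd.dvd.mul_left (pow_dvd_pow q ?_) _) _) _
    nlinarith
  have h₂ := pow_dvd_gapThetaAux_sub q n i
  have h₃ := (pow_dvd_gapThetaAux_sub q n (i + 1)).mul_left (q ^ (i + 1))
  convert dvd_add (dvd_add h₁ h₂) h₃ using 1
  ring

theorem pow_dvd_qPoch_sub_gapTheta (q : R) {m n i : ℕ} (hnm : n ≤ m) (hni : n ≤ i) :
    q ^ n ∣ qPoch q q m - gapTheta q n i := by
  cases n with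
  | zero => simp
  | succ n =>
    have hpoch {k : ℕ} (hk : n ≤ k) : q ^ (n + 1) ∣ qPoch q q k - qPoch q q n := by
      rw [pow_succ']
      exact dvd_qPoch_sub_qPoch q q hk
    have htheta : q ^ (n + 1) ∣ gapTheta q (n + 1) i - qPoch q q i := by
      rw [gapTheta, sum_range_succ']
      simp only [pow_zero, Nat.choose_zero_succ, mul_zero, add_zero, one_mul, zero_add, pow_one,
        one_sub_mul, add_sub_assoc, sub_sub_cancel_left]
      refine dvd_add (dvd_sum fun r _ => ?_) (((pow_dvd_pow q (by omega)).mul_right _).neg_right)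
      refine Dvd.dvd.mul_right (Dvd.dvd.mul_right (Dvd.dvd.mul_left (pow_dvd_pow q ?_) _) _) _
      nlinarith
    convert dvd_sub (dvd_sub (hpoch (Nat.le_of_succ_le hnm)) (hpoch (Nat.le_of_succ_le hni)))
      htheta using 1
    ring

end QSeries

section RogersRamanujan

open PowerSeries

theorem isUnit_qPoch {R : Type*} [CommRing R] {a : R⟦X⟧} (ha : constantCoeff a = 0) (q : R⟦X⟧)
    (n : ℕ) : IsUnit (qPoch a q n) := by
  simp [isUnit_iff_constantCoeff, qPoch, ha]

theorem qPoch_mul_rhoSeries {S : Set ℕ} {a c n : ℕ} (ha : 1 ≤ a) (hc : 1 ≤ c)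
    (hS : ∀ i < n, a + c * i ∈ S) :
    qPoch (X ^ a) (X ^ c) n * rhoSeries S = rhoSeries (S \ {x | ∃ i < n, x = a + c * i}) := by
  induction n with
  | zero => simp [qPoch_zero]
  | succ n ih =>
    have hmem : a + c * n ∈ S \ {x | ∃ i < n, x = a + c * i} := by
      refine ⟨hS n n.lt_succ_self, fun ⟨i, hi, hni⟩ => hi.ne ?_⟩
      exact (Nat.eq_of_mul_eq_mul_left hc (Nat.add_left_cancel hni)).symm
    rw [qPoch_succ, mul_comm (qPoch _ _ _), mul_assoc,
      ih fun i hi => hS i (hi.trans n.lt_succ_self), ← pow_mul, ← pow_add,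
      one_sub_X_pow_mul_rhoSeries hmem (by omega), sdiff_sdiff_left]
    congr 2
    ext x
    simp only [Set.sup_eq_union, Set.mem_union, Set.mem_ofPred_eq, Set.mem_singleton_iff,
      Nat.lt_succ_iff_lt_or_eq, or_and_right, exists_or, exists_eq_left]

theorem X_pow_dvd_qPoch_mul_gapSeries_sub {m n : ℕ} (hnm : n ≤ m) (i : ℕ) :
    X ^ n ∣ qPoch X X m * gapSeries 2 (i + 1) - gapTheta X n i := by
  refine dvd_of_dvd_sub_sub_mul (F := fun i => qPoch X X m * gapSeries 2 (i + 1) - gapTheta X n i)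
    (c := fun i => X ^ (i + 1)) (n := n) one_le_two (fun i => ?_) (fun i hi => ?_) i
  · rw [gapSeries_eq_add (Nat.le_add_left 1 i), add_right_comm i 1 2]
    convert (pow_dvd_gapTheta_sub (X : ℤ⟦X⟧) n i).neg_right using 1
    ring
  · have h := (pow_dvd_pow X (hi.trans i.le_succ)).trans (X_pow_dvd_gapSeries_sub_one 2 (i + 1))
    convert dvd_add (h.mul_left (qPoch X X m)) (pow_dvd_qPoch_sub_gapTheta X hnm hi) using 1
    ring

theorem X_pow_dvd_qPoch_mul_gapSeries_two_sub_one (n : ℕ) :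
    X ^ n ∣ qPoch (X ^ 2) (X ^ 5) n * qPoch (X ^ 3) (X ^ 5) n * gapSeries 2 2 - 1 := by
  have hq : (X * X ^ 4 : ℤ⟦X⟧) = X ^ 5 := by ring
  have hunit {a : ℕ} (ha : a ≠ 0) (m : ℕ) : IsUnit (qPoch (X ^ a : ℤ⟦X⟧) (X ^ 5) m) :=
    isUnit_qPoch (by simp [ha]) _ m
  have hgap := X_pow_dvd_qPoch_mul_gapSeries_sub (Nat.le_mul_of_pos_left n (by norm_num : 0 < 5)) 1
  have haux := pow_dvd_gapThetaAux_sub (X : ℤ⟦X⟧) n 0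
  have htriple := pow_dvd_qPoch_mul_sub_sum (X_ne_zero (R := ℤ)) (pow_ne_zero 4 X_ne_zero) dvd_rfl
    (dvd_pow_self X four_ne_zero) (hq ▸ hunit (by norm_num)) n
  have htheta : ∑ r ∈ Finset.range n,
      (-1) ^ r * (X ^ 4) ^ r * (X ^ 5) ^ r.choose 2 * (1 - X ^ (2 * r + 1)) =
        gapThetaAux (X : ℤ⟦X⟧) n 0 := by
    refine Finset.sum_congr rfl fun r _ => ?_
    rw [qPoch_zero]
    ring
  rw [hq, htheta] at htriple
  rw [qPoch_mul] at hgap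
  simp only [Finset.prod_range_succ, Finset.prod_range_zero, ← pow_succ', one_mul, zero_add,
    Nat.reduceAdd, pow_one] at hgap
  have hunit' : IsUnit (qPoch (X ^ 5) (X ^ 5) n *
      (qPoch (X : ℤ⟦X⟧) (X ^ 5) n * qPoch (X ^ 4) (X ^ 5) n)) :=
    (hunit (by norm_num) n).mul ((isUnit_qPoch constantCoeff_X _ n).mul (hunit four_ne_zero n))
  refine hunit'.dvd_mul_left.1 ?_
  convert dvd_sub (dvd_sub hgap haux) htriple using 1
  ring

/-- The second Rogers–Ramanujan identity. -/
theorem rhoSeries_two_three_mod_five :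
    rhoSeries {x | x ≡ 2 [MOD 5] ∨ x ≡ 3 [MOD 5]} = gapSeries 2 2 := by
  ext n
  set N := n + 1
  set S := {x | x ≡ 2 [MOD 5] ∨ x ≡ 3 [MOD 5]}
  have hunit : IsUnit (qPoch (X ^ 2 : ℤ⟦X⟧) (X ^ 5) N * qPoch (X ^ 3) (X ^ 5) N) :=
    (isUnit_qPoch (by simp) _ N).mul (isUnit_qPoch (by simp) _ N)
  have hrho : X ^ N ∣ qPoch (X ^ 2) (X ^ 5) N * qPoch (X ^ 3) (X ^ 5) N * rhoSeries S - 1 := by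
    have h₃ : ∀ i < N, 3 + 5 * i ∈ S := fun i _ => Or.inr (by simp [Nat.ModEq])
    have h₂ : ∀ i < N, 2 + 5 * i ∈ S \ {x | ∃ i < N, x = 3 + 5 * i} := fun i _ =>
      ⟨Or.inl (by simp [Nat.ModEq]), fun ⟨j, _, hj⟩ => by omega⟩
    rw [mul_assoc, qPoch_mul_rhoSeries (by norm_num) (by norm_num) h₃,
      qPoch_mul_rhoSeries (by norm_num) (by norm_num) h₂]
    refine X_pow_dvd_rhoSeries_sub_one fun x hx => ?_
    by_contra! hxN
    rcases hx.1.1 with h | h <;> rw [Nat.ModEq] at h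
    · exact hx.2 ⟨x / 5, by omega, by omega⟩
    · exact hx.1.2 ⟨x / 5, by omega, by omega⟩
  have hdiff := dvd_sub hrho (X_pow_dvd_qPoch_mul_gapSeries_two_sub_one N)
  rw [sub_sub_sub_cancel_right, ← mul_sub, hunit.dvd_mul_left, X_pow_dvd_iff] at hdiff
  exact sub_eq_zero.1 (hdiff n n.lt_succ_self)

theorem congMinusCount_le_gapCount_two (n : ℕ) : congMinusCount 2 3 n ≤ gapCount 2 3 n := by
  have hset : {x | (x ≡ 3 [MOD 2 + 3] ∨ x + 3 ≡ 0 [MOD 2 + 3]) ∧ x ≠ 2 + 3 - 3} =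
      {x : ℕ | x ≡ 2 [MOD 5] ∨ x ≡ 3 [MOD 5]} \ {2} := by
    ext x
    simp only [Nat.ModEq, Set.mem_ofPred_eq, Set.mem_sdiff, Set.mem_singleton_iff]
    omega
  have hseries : rhoSeries ({x : ℕ | x ≡ 2 [MOD 5] ∨ x ≡ 3 [MOD 5]} \ {2}) =
      gapSeries 2 3 - X ^ 2 * (gapSeries 2 2 - gapSeries 2 4) := by
    rw [← one_sub_X_pow_mul_rhoSeries (by simp [Nat.ModEq]) one_le_two,
      rhoSeries_two_three_mod_five]
    linear_combination gapSeries_eq_add one_le_two 2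
  have hcoeff := congrArg (coeff n) hseries
  rw [map_sub, coeff_X_pow_mul'] at hcoeff
  simp only [rhoSeries, gapSeries, coeff_mk, map_sub] at hcoeff
  rw [congMinusCount_eq_rhoCount, hset]
  have : gapCount 2 4 (n - 2) ≤ gapCount 2 2 (n - 2) :=
    gapCount_antitone 2 (n - 2) (by norm_num)
  split_ifs at hcoeff <;> omega

end RogersRamanujan

/-! ### Large gaps: a lower bound for the gap side -/

theorem mul_le_gapCount {d a n w G : ℕ} (ha : 1 ≤ a)
    (h : ∀ x, a ≤ x → x < a + w → x ≤ n ∧ G ≤ gapCount d (x + d) (n - x)) :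
    w * G ≤ gapCount d a n := by
  induction w generalizing a with
  | zero => simp
  | succ w ih =>
    obtain ⟨han, hG⟩ := h a le_rfl (by omega)
    have := ih (a := a + 1) (Nat.le_add_left 1 a) fun x hx hxw => h x (by omega) (by omega)
    rw [gapCount_eq_add ha han, add_one_mul]
    omega

theorem pow_le_gapCount {d a n v j : ℕ} (ha : 1 ≤ a)
    (h : 2 * j * (a + v) + (v + d) * (j * j + j) + 2 * a ≤ 2 * n) :
    (v + 1) ^ j ≤ gapCount d a n := by
  induction j generalizing a n with
  | zero => exact gapCount_pos (by omega) (by omega)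
  | succ j ih =>
    rw [pow_succ']
    have hn : a + v ≤ n := by nlinarith
    refine mul_le_gapCount ha fun x _ hxv => ⟨by omega, ?_⟩
    have hanti : gapCount d (a + v + d) (n - x) ≤ gapCount d (x + d) (n - x) :=
      gapCount_antitone d (n - x) (by omega)
    refine (ih (by omega) ?_).trans hanti
    have : n ≤ (n - x) + (a + v) := by omega
    nlinarith

/-! ### Large gaps: rounding the parts of the congruence side -/

/-- The number of ways to choose multiplicities for the weights in a list with total weight at
most `N`. It bounds the number of partitions of an integer below `(N + 1) * d` whose parts are at
least `d` times the corresponding weights. -/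
def weightCount : List ℕ → ℕ → ℕ
  | [], _ => 1
  | w :: l, N => ∑ i ∈ Finset.range (N / w + 1), weightCount l (N - i * w)

theorem weightCount_le_cons (w : ℕ) (l : List ℕ) (N : ℕ) :
    weightCount l N ≤ weightCount (w :: l) N := by
  rw [weightCount, Finset.sum_range_succ']
  simp

theorem weightCount_cons_eq_add {w : ℕ} (hw : 0 < w) (l : List ℕ) {N : ℕ} (hN : w ≤ N) :
    weightCount (w :: l) N = weightCount l N + weightCount (w :: l) (N - w) := by
  rw [weightCount, weightCount, Finset.sum_range_succ', Nat.div_eq_sub_div hw hN, add_comm]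
  simp only [zero_mul, Nat.sub_zero, add_one_mul, Nat.sub_sub, add_comm w]

theorem rhoCount_insert_le_weightCount {d b w : ℕ} {S : Set ℕ} {l : List ℕ} (hd : 0 < d)
    (hw : 0 < w) (hb : w * d ≤ b) (h : ∀ n M, n < (M + 1) * d → rhoCount S n ≤ weightCount l M)
    (n M : ℕ) (hn : n < (M + 1) * d) : rhoCount (insert b S) n ≤ weightCount (w :: l) M := by
  induction n using Nat.strong_induction_on generalizing M with
  | _ n ih =>
    have hb1 : 1 ≤ b := (Nat.mul_pos hw hd).trans_le hb
    rcases lt_or_ge n b with hnb | hbn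
    · exact (rhoCount_insert_le_of_lt hnb).trans ((h n M hn).trans (weightCount_le_cons w l M))
    have hwM : w ≤ M :=
      Nat.lt_succ_iff.1 (Nat.lt_of_mul_lt_mul_right ((hb.trans hbn).trans_lt hn))
    rw [weightCount_cons_eq_add hw l hwM]
    refine (rhoCount_insert_le_add hb1 hbn).trans
      (Nat.add_le_add (h n M hn) (ih _ (by omega) _ ?_))
    obtain ⟨t, rfl⟩ := Nat.exists_eq_add_of_le hwM
    rw [Nat.add_sub_cancel_left]
    have : (w + t + 1) * d = w * d + (t + 1) * d := by ring
    omega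

/-- The weights `1, 2, 2, 3, 3, …, m + 1, m + 1` of the elements of `smallParts`, in decreasing
order. -/
def doubleWeights : ℕ → List ℕ
  | 0 => [1]
  | m + 1 => (m + 2) :: (m + 2) :: doubleWeights m

/-- The parts up to `(m + 1) * (d + 3) + a` that `congMinusCount d a` allows. Since `d + 3 - a` is
excluded, the parts next to the multiple `d + 3` of the modulus contribute only `d + 3 + a`. -/
def smallParts (d a : ℕ) : ℕ → Set ℕ
  | 0 => insert (d + 3 + a) {a}
  | m + 1 => insert ((m + 2) * (d + 3) - a) (insert ((m + 2) * (d + 3) + a) (smallParts d a m))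

theorem mem_smallParts {d a m j x : ℕ} (hj : 2 ≤ j) (hjm : j ≤ m + 1)
    (hx : x + a = j * (d + 3) ∨ x = j * (d + 3) + a) : x ∈ smallParts d a m := by
  induction m with
  | zero => omega
  | succ m ih =>
    rcases hjm.lt_or_eq with hlt | rfl
    · exact Or.inr (Or.inr (ih (by omega)))
    · exact hx.imp Nat.eq_sub_of_add_eq Or.inl

theorem self_mem_smallParts (d a m : ℕ) : a ∈ smallParts d a m ∧ d + 3 + a ∈ smallParts d a m := by
  induction m with
  | zero => simp [smallParts]
  | succ m ih => exact ⟨Or.inr (Or.inr ih.1), Or.inr (Or.inr ih.2)⟩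

theorem rhoCount_smallParts_le {d a : ℕ} (hd : 0 < d) (ha : 1 ≤ a) (ha6 : a ≤ 6) (m n M : ℕ)
    (hn : n < (M + 1) * d) : rhoCount (smallParts d a m) n ≤ weightCount (doubleWeights m) M := by
  induction m generalizing n M with
  | zero =>
    exact rhoCount_insert_le_weightCount hd one_pos (by omega)
      (fun n _ _ => rhoCount_singleton_le_one ha n) n M hn
  | succ m ih =>
    have hmul : (m + 2) * (d + 3) = (m + 2) * d + 3 * m + 6 := by ring
    exact rhoCount_insert_le_weightCount hd (by omega) (by omega)
      (rhoCount_insert_le_weightCount hd (by omega) (by omega) ih) n M hn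

theorem eq_or_exists_of_modEq {D a x : ℕ} (ha : 1 ≤ a) (haD : a < D)
    (h : x ≡ a [MOD D] ∨ x + a ≡ 0 [MOD D]) (hx : x ≠ D - a) :
    x = a ∨ x = D + a ∨ ∃ j, 2 ≤ j ∧ (x + a = j * D ∨ x = j * D + a) := by
  rcases h with h | h
  · have hmod : D * (x / D) + a = x := by
      conv_rhs => rw [← Nat.div_add_mod x D, h, Nat.mod_eq_of_lt haD]
    rcases hj : x / D with _ | _ | j
    · exact Or.inl (by simpa [hj, eq_comm] using hmod)
    · exact Or.inr (Or.inl (by simpa [hj, eq_comm] using hmod))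
    · exact Or.inr (Or.inr ⟨j + 2, by omega, Or.inr (by rw [← hmod, hj, mul_comm])⟩)
  · obtain ⟨j, hj⟩ := Nat.modEq_zero_iff_dvd.1 h
    rcases j with _ | _ | j
    · omega
    · omega
    · exact Or.inr (Or.inr ⟨j + 2, by omega, Or.inl (hj.trans (mul_comm _ _))⟩)

theorem congMinusCount_le_weightCount {d a n m : ℕ} (ha : 1 ≤ a) (ha6 : a ≤ 6) (had : a < d + 3)
    (hn : n < (m + 2) * d) : congMinusCount d a n ≤ weightCount (doubleWeights m) (m + 1) := by
  rw [congMinusCount_eq_rhoCount]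
  have hd : 0 < d := Nat.pos_of_mul_pos_left (Nat.zero_lt_of_lt hn)
  refine (rhoCount_mono fun x hx hxn => ?_).trans (rhoCount_smallParts_le hd ha ha6 m n (m + 1) hn)
  rcases eq_or_exists_of_modEq ha had hx.1 hx.2 with rfl | rfl | ⟨j, hj, hjx⟩
  · exact (self_mem_smallParts d x m).1
  · exact (self_mem_smallParts d a m).2
  · refine mem_smallParts hj ?_ hjx
    by_contra! hmj
    have : (m + 2) * d + (m + 2) * 3 ≤ j * (d + 3) := by
      rw [← mul_add]
      exact Nat.mul_le_mul_right _ hmj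
    omega

theorem congMinusCount_le_rhoCount_singleton {d a n : ℕ} (ha : 1 ≤ a) (had : 2 * a ≤ d + 3)
    (hn : n < d + 3 + a) : congMinusCount d a n ≤ rhoCount {a} n := by
  rw [congMinusCount_eq_rhoCount]
  refine rhoCount_mono fun x hx hxn => ?_
  rcases eq_or_exists_of_modEq ha (by omega) hx.1 hx.2 with h | h | ⟨j, hj, h⟩
  · exact h
  · omega
  · have : 2 * (d + 3) ≤ j * (d + 3) := Nat.mul_le_mul_right _ hj
    omega

/-! ### Large gaps: Rankin's method -/

section Rankin

variable {K : Type*} [Field K] [LinearOrder K] [IsStrictOrderedRing K]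

theorem weightCount_mul_prod_le_one {x : K} (hx₀ : 0 ≤ x) (hx₁ : x ≤ 1) (l : List ℕ) (N : ℕ) :
    weightCount l N * x ^ N * (l.map fun w => 1 - x ^ w).prod ≤ 1 := by
  induction l generalizing N with
  | nil => simpa [weightCount] using pow_le_one₀ hx₀ hx₁
  | cons w l ih =>
    have hw : 0 ≤ 1 - x ^ w := sub_nonneg.2 (pow_le_one₀ hx₀ hx₁)
    have hpow {i : ℕ} (hi : i ∈ Finset.range (N / w + 1)) :
        x ^ N = (x ^ w) ^ i * x ^ (N - i * w) := by
      have hiN : i * w ≤ N := (Nat.mul_le_mul_right w (Finset.mem_range_succ_iff.1 hi)).trans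
        (Nat.div_mul_le_self N w)
      rw [← pow_mul, ← pow_add, mul_comm w, Nat.add_sub_cancel' hiN]
    rw [weightCount, List.map_cons, List.prod_cons, Nat.cast_sum]
    calc (∑ i ∈ Finset.range (N / w + 1), (weightCount l (N - i * w) : K)) * x ^ N *
          ((1 - x ^ w) * (l.map fun w => 1 - x ^ w).prod)
        = (∑ i ∈ Finset.range (N / w + 1), (x ^ w) ^ i * (weightCount l (N - i * w) *
          x ^ (N - i * w) * (l.map fun w => 1 - x ^ w).prod)) * (1 - x ^ w) := by
          simp only [Finset.sum_mul]
          refine Finset.sum_congr rfl fun i hi => ?_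
          rw [hpow hi]
          ring
      _ ≤ (∑ i ∈ Finset.range (N / w + 1), (x ^ w) ^ i) * (1 - x ^ w) := by
          refine mul_le_mul_of_nonneg_right (Finset.sum_le_sum fun i _ => ?_) hw
          exact mul_le_of_le_one_right (by positivity) (ih _)
      _ ≤ 1 := by
          rw [geom_sum_mul_neg]
          exact sub_le_self _ (by positivity)

theorem weightCount_le_of_one_le {x : K} (hx₀ : 0 ≤ x) (hx₁ : x ≤ 1) {l : List ℕ} {N : ℕ}
    {B : K} (hB : 0 ≤ B) (h : 1 ≤ B * (x ^ N * (l.map fun w => 1 - x ^ w).prod)) :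
    weightCount l N ≤ B := by
  have hpos : 0 < x ^ N * (l.map fun w => 1 - x ^ w).prod :=
    pos_of_mul_pos_right (zero_lt_one.trans_le h) hB
  have hle := (weightCount_mul_prod_le_one hx₀ hx₁ l N).trans h
  rw [mul_assoc] at hle
  exact le_of_mul_le_mul_right hle hpos

theorem sum_pow_succ_le {y : K} (hy₀ : 0 ≤ y) (hy₁ : y < 1) (M : ℕ) :
    ∑ m ∈ Finset.range M, y ^ (m + 1) ≤ y / (1 - y) := by
  simp only [pow_succ', ← Finset.mul_sum]
  rw [le_div_iff₀ (sub_pos.2 hy₁), mul_assoc, geom_sum_mul_neg]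
  exact mul_le_of_le_one_right hy₀ (sub_le_self _ (by positivity))

theorem succ_mul_pow_mul_one_sub_le {x : K} (hx₀ : 0 ≤ x) (hx₁ : x ≤ 1) (j : ℕ) :
    (j + 1) * x ^ j * (1 - x) ≤ 1 - x ^ (j + 1) := by
  rw [← geom_sum_mul_neg x (j + 1)]
  refine mul_le_mul_of_nonneg_right ?_ (sub_nonneg.2 hx₁)
  have := Finset.card_nsmul_le_sum (Finset.range (j + 1)) (fun i => x ^ i) (x ^ j) fun i hi =>
    pow_le_pow_of_le_one hx₀ hx₁ (Finset.mem_range_succ_iff.1 hi)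
  simpa using this

theorem pow_succ_div_one_sub_le {x : K} (hx₀ : 0 ≤ x) (hx₁ : x < 1) (j : ℕ) :
    x ^ (j + 1) / (1 - x ^ (j + 1)) / (j + 1) ≤ x / (1 - x) * (1 / (j + 1) ^ 2) := by
  have hy : 0 < 1 - x ^ (j + 1) := sub_pos.2 (pow_lt_one₀ hx₀ hx₁ j.succ_ne_zero)
  rw [div_div, div_mul_div_comm, mul_one, div_le_div_iff₀ (mul_pos hy (by positivity))
    (mul_pos (sub_pos.2 hx₁) (by positivity))]
  calc x ^ (j + 1) * ((1 - x) * (j + 1) ^ 2)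
      = x * (j + 1) * ((j + 1) * x ^ j * (1 - x)) := by ring
    _ ≤ x * (j + 1) * (1 - x ^ (j + 1)) :=
        mul_le_mul_of_nonneg_left (succ_mul_pow_mul_one_sub_le hx₀ hx₁.le j) (by positivity)
    _ = x * ((1 - x ^ (j + 1)) * (j + 1)) := by ring

theorem neg_sum_log_one_sub_pow_le {x : ℝ} (hx₀ : 0 ≤ x) (hx₁ : x < 1) (M : ℕ) :
    -∑ m ∈ Finset.range M, Real.log (1 - x ^ (m + 1)) ≤ x / (1 - x) * (Real.pi ^ 2 / 6) := by
  have hlog : HasSum (fun j : ℕ => ∑ m ∈ Finset.range M, (x ^ (m + 1)) ^ (j + 1) / ((j : ℝ) + 1))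
      (∑ m ∈ Finset.range M, -Real.log (1 - x ^ (m + 1))) := by
    refine hasSum_sum fun m _ => Real.hasSum_pow_div_log_of_abs_lt_one ?_
    rw [abs_of_nonneg (pow_nonneg hx₀ _)]
    exact pow_lt_one₀ hx₀ hx₁ m.succ_ne_zero
  have hzeta : HasSum (fun j : ℕ => x / (1 - x) * (1 / ((j : ℝ) + 1) ^ 2))
      (x / (1 - x) * (Real.pi ^ 2 / 6)) := by
    refine HasSum.mul_left _ ?_
    simpa using (hasSum_nat_add_iff' 1).2 hasSum_zeta_two
  rw [← Finset.sum_neg_distrib]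
  refine hasSum_le (fun j => ?_) hlog hzeta
  rw [← Finset.sum_div]
  simp only [← pow_mul, mul_comm _ (j + 1)]
  simp only [pow_mul]
  have hgeom := sum_pow_succ_le (pow_nonneg hx₀ (j + 1)) (pow_lt_one₀ hx₀ hx₁ j.succ_ne_zero) M
  exact (div_le_div_of_nonneg_right hgeom (by positivity)).trans (pow_succ_div_one_sub_le hx₀ hx₁ j)

theorem exp_neg_le_prod_one_sub_pow {x : ℝ} (hx₀ : 0 ≤ x) (hx₁ : x < 1) (M : ℕ) :
    Real.exp (-(x / (1 - x) * (Real.pi ^ 2 / 6))) ≤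
      ∏ i ∈ Finset.range M, (1 - x ^ (i + 1)) := by
  have hpos (i : ℕ) : 0 < 1 - x ^ (i + 1) := sub_pos.2 (pow_lt_one₀ hx₀ hx₁ i.succ_ne_zero)
  rw [← Real.le_log_iff_exp_le (Finset.prod_pos fun i _ => hpos i),
    Real.log_prod fun i _ => (hpos i).ne']
  exact neg_le.1 (neg_sum_log_one_sub_pow_le hx₀ hx₁ M)

theorem sq_prod_le_prod_doubleWeights {x : K} (hx₀ : 0 ≤ x) (hx₁ : x ≤ 1) (m : ℕ) :
    (∏ i ∈ Finset.range (m + 1), (1 - x ^ (i + 1))) ^ 2 ≤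
      ((doubleWeights m).map fun w => 1 - x ^ w).prod := by
  induction m with
  | zero =>
    simpa [doubleWeights] using
      pow_le_of_le_one (sub_nonneg.2 hx₁) (sub_le_self 1 hx₀) two_ne_zero
  | succ m ih =>
    rw [Finset.prod_range_succ, mul_pow, doubleWeights, List.map_cons, List.map_cons,
      List.prod_cons, List.prod_cons, ← mul_assoc, ← sq, mul_comm]
    exact mul_le_mul_of_nonneg_left ih (sq_nonneg _)

theorem weightCount_doubleWeights_le_exp {s : ℝ} (hs : 0 < s) {N : ℕ} (hN : N ≤ s ^ 2) (m : ℕ) :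
    weightCount (doubleWeights m) N ≤ Real.exp ((2 + Real.pi ^ 2 / 6) * s) := by
  set x : ℝ := s / (s + 2) with hx
  have hx₀ : 0 < x := by positivity
  have hx₁ : x < 1 := (div_lt_one (by positivity)).2 (by linarith)
  have hxs : x / (1 - x) = s / 2 := by
    rw [hx]
    field_simp
    ring
  have hprod : Real.exp (-(Real.pi ^ 2 / 6 * s)) ≤
      ((doubleWeights m).map fun w => 1 - x ^ w).prod := by
    refine le_trans (le_of_eq ?_) ((pow_le_pow_left₀ (Real.exp_pos _).le
      (exp_neg_le_prod_one_sub_pow hx₀.le hx₁ (m + 1)) 2).trans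
      (sq_prod_le_prod_doubleWeights hx₀.le hx₁.le m))
    rw [← Real.exp_nat_mul, hxs]
    congr 1
    push_cast
    ring
  have hpow : Real.exp (-(2 * s)) ≤ x ^ N := by
    have hinv : x⁻¹ ≤ Real.exp (2 / s) := by
      rw [hx, inv_div, add_div, div_self hs.ne', add_comm]
      exact Real.add_one_le_exp _
    rw [Real.exp_neg, inv_le_comm₀ (Real.exp_pos _) (pow_pos hx₀ N), ← inv_pow]
    refine (pow_le_pow_left₀ (inv_nonneg.2 hx₀.le) hinv N).trans ?_
    rw [← Real.exp_nat_mul, Real.exp_le_exp, mul_div_assoc', div_le_iff₀ hs]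
    linarith
  refine weightCount_le_of_one_le hx₀.le hx₁.le (Real.exp_pos _).le ?_
  calc (1 : ℝ) = Real.exp ((2 + Real.pi ^ 2 / 6) * s) *
        (Real.exp (-(2 * s)) * Real.exp (-(Real.pi ^ 2 / 6 * s))) := by
        rw [← Real.exp_add, ← Real.exp_add, eq_comm, Real.exp_eq_one_iff]
        ring
    _ ≤ _ := by gcongr

theorem log_ninety_gt : 4.499 < Real.log 90 := by
  have hlog : Real.log 90 = Real.log 2 + 2 * Real.log 3 + Real.log 5 := by
    rw [show (90 : ℝ) = 2 * 3 ^ 2 * 5 by norm_num, Real.log_mul (by norm_num) (by norm_num),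
      Real.log_mul (by norm_num) (by norm_num), Real.log_pow]
    norm_num
  linarith [Real.log_two_gt_d9, Real.log_three_gt_d9, Real.log_five_gt_d9]

theorem exp_le_ninety_pow {j : ℕ} (hj : 9 ≤ j) :
    Real.exp ((2 + Real.pi ^ 2 / 6) * (j + 2)) ≤ 90 ^ j := by
  have hpi : Real.pi ^ 2 / 6 ≤ 1.645 := by nlinarith [Real.pi_lt_d4, Real.pi_pos]
  have hj' : (9 : ℝ) ≤ j := by exact_mod_cast hj
  rw [← Real.le_log_iff_exp_le (by positivity), Real.log_pow]
  calc (2 + Real.pi ^ 2 / 6) * ((j : ℝ) + 2) ≤ (2 + 1.645) * (j + 2) := by gcongr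
    _ ≤ j * 4.499 := by linarith
    _ ≤ j * Real.log 90 := by gcongr; exact log_ninety_gt.le

theorem weightCount_doubleWeights_le {j : ℕ} (hj : 2 ≤ j) :
    weightCount (doubleWeights (j * (j + 4) + 1)) (j * (j + 4) + 2) ≤ 90 ^ j := by
  rcases hj.eq_or_lt with rfl | hj2
  · decide +kernel
  rcases lt_or_ge j 9 with hj9 | hj9
  · -- The same choice `x = s / (s + 2)` with `s = j + 2` as in the exponential bound.
    have hrankin {j : ℕ} (h : 1 ≤ ((90 ^ j : ℕ) : ℚ) * (((j + 2) / (j + 4)) ^ (j * (j + 4) + 2) *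
        ((doubleWeights (j * (j + 4) + 1)).map fun w => 1 - ((j + 2) / (j + 4) : ℚ) ^ w).prod)) :
        weightCount (doubleWeights (j * (j + 4) + 1)) (j * (j + 4) + 2) ≤ 90 ^ j := by
      have hx₁ : ((j : ℚ) + 2) / (j + 4) ≤ 1 := (div_le_one (by positivity)).2 (by linarith)
      exact_mod_cast weightCount_le_of_one_le (by positivity) hx₁ (Nat.cast_nonneg _) h
    interval_cases j <;> exact hrankin (by decide +kernel)
  · have hN : ((j * (j + 4) + 2 : ℕ) : ℝ) ≤ ((j : ℝ) + 2) ^ 2 := by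
      push_cast
      nlinarith
    exact_mod_cast (weightCount_doubleWeights_le_exp (by positivity) hN _).trans
      (exp_le_ninety_pow hj9)

end Rankin

/-! ### Large gaps: comparison -/

theorem two_le_gapCount {d a n : ℕ} (ha : 1 ≤ a) (hn : d + 2 * a ≤ n) : 2 ≤ gapCount d a n := by
  rw [gapCount_eq_add ha (by omega)]
  exact Nat.add_le_add (gapCount_pos (by omega) (by omega)) (gapCount_pos (by omega) (by omega))

theorem exists_sq_bracket {q : ℕ} (hq : 8 ≤ q) : ∃ j, 2 ≤ j ∧ j * (j + 2) ≤ q ∧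
    q < j * (j + 4) + 3 := by
  have hk : 3 ≤ Nat.sqrt (q + 1) := Nat.le_sqrt.2 (by omega)
  obtain ⟨j, hj⟩ := Nat.exists_eq_add_of_le' (one_le_two.trans (Nat.le_of_succ_le hk))
  have hlo := Nat.sqrt_le (q + 1)
  have hhi := Nat.lt_succ_sqrt (q + 1)
  rw [Nat.succ_eq_add_one] at hhi
  rw [hj] at hlo hhi
  exact ⟨j, by omega, by linarith, by linarith⟩

theorem congMinusCount_le_gapCount_of_large {d a : ℕ} (ha : 1 ≤ a) (ha3 : a ≤ 3) (hd : 91 ≤ d)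
    (n : ℕ) : congMinusCount d a n ≤ gapCount d a n := by
  rcases lt_or_ge n (d + 3 + a) with h₁ | h₁
  · exact (congMinusCount_le_rhoCount_singleton ha (by omega) h₁).trans
      (rhoCount_singleton_le_gapCount ha d n)
  have hweight {m : ℕ} (hn : n < (m + 2) * d) :=
    congMinusCount_le_weightCount ha (ha3.trans (by norm_num)) (by omega) hn
  rcases lt_or_ge n (2 * d) with h₂ | h₂
  · exact ((hweight h₂ (m := 0)).trans (by decide)).trans (two_le_gapCount ha (by omega))
  rcases lt_or_ge n (4 * d) with h₄ | h₄
  · exact ((hweight h₄ (m := 2)).trans (by decide +kernel : _ ≤ (9 + 1) ^ 1)).trans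
      (pow_le_gapCount ha (by omega))
  rcases lt_or_ge n (8 * d) with h₈ | h₈
  · exact ((hweight h₈ (m := 6)).trans (by decide +kernel : _ ≤ (109 + 1) ^ 1)).trans
      (pow_le_gapCount ha (by omega))
  obtain ⟨j, hj, hlo, hhi⟩ := exists_sq_bracket ((Nat.le_div_iff_mul_le (by omega)).2 h₈)
  rw [Nat.le_div_iff_mul_le (by omega)] at hlo
  rw [Nat.div_lt_iff_lt_mul (by omega)] at hhi
  refine ((hweight hhi).trans (weightCount_doubleWeights_le hj)).trans
    (pow_le_gapCount (v := 89) ha ?_)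
  nlinarith

theorem stmt0_general (d n : ℕ) (hd : d = 1 ∨ d = 2 ∨ 91 ≤ d) :
    congMinusCount d 3 n ≤ gapCount d 3 n := by
  rcases hd with rfl | rfl | hd
  · exact congMinusCount_le_gapCount_one n
  · exact congMinusCount_le_gapCount_two n
  · exact congMinusCount_le_gapCount_of_large (by norm_num) le_rfl hd n

theorem stmt0 (d n : ℕ) (hn : 1 ≤ n)
    (hd : d = 1 ∨ d = 2 ∨ d = 91 ∨ d = 92 ∨ d = 93 ∨ 187 ≤ d) :
    congMinusCount d 3 n ≤ gapCount d 3 n :=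
  stmt0_general d n (by omega)
end

section
/- For all integers d, n ≥ 1 and a ≥ 5 such that ⌈d/a⌉ ≥ 2^{a+3} − 1, one has q_d^{(a)}(n) ≥ Q_d^{(a,-,-)}(n). -/
/-!
Let `u = ⌈d / 31⌉` and `m = ⌊n / u⌋`; the two counts are compared through partitions of `m`.

The `k`-th smallest admissible part (those different from `a`, `d + 3 - a` and `d + 3 + a`) is at
least `u` times the `k`-th odd number of the form `31 * (2 * j + 1) + 2 ^ e`, `1 ≤ e ≤ 5`. Replacing
each part by this label, dropping the parts `d + 3 + a` and filling up with ones gives a partition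
of `m` into odd parts congruent to powers of two modulo `31 = 2 ^ 5 - 1`.

Doubling permutes the powers of two modulo `M = 2 ^ s - 1`, so Glaisher's bijection turns such a
partition into one with distinct parts in the same residue classes. Distinct parts of one class
differ by at least `M`, and the classes of `1, 2, 4, …, 2 ^ (s - 1)` are merged one after another by
an operation that keeps the gaps and can be undone: below `2 ^ k` a residue `c` and the sum
`c + 2 ^ k` are told apart by their size.

Finally, multiplying all parts by `u` and adding `n % u` to the largest one turns gaps `31` into
gaps `31 * u ≥ d` and makes all parts at least `u ≥ a`.
-/

/-! ### Partitions with gaps -/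

/-- The gap condition on a partition, written as a list with its largest part first. -/
abbrev HasGaps (d : ℕ) (l : List ℕ) : Prop :=
  l.Pairwise fun x y => y + d ≤ x

/-- The partitions counted by `gapCount d a n`, as lists with the largest part first. -/
def gapLists (d a n : ℕ) : Set (List ℕ) :=
  {l | HasGaps d l ∧ (∀ x ∈ l, a ≤ x) ∧ l.sum = n}

theorem finite_gapLists {d a n : ℕ} (ha : 1 ≤ a) : (gapLists d a n).Finite :=
  (Set.finite_range (Composition.blocks (n := n))).subset fun l hl =>
    ⟨⟨l, fun hx => ha.trans (hl.2.1 _ hx), hl.2.2⟩, rfl⟩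

theorem HasGaps.sort_coe {d : ℕ} {l : List ℕ} (hl : HasGaps d l) :
    (l : Multiset ℕ).sort (· ≤ ·) = l.reverse := by
  have hperm : ((l : Multiset ℕ).sort (· ≤ ·)).Perm l.reverse := by
    rw [← Multiset.coe_eq_coe, Multiset.sort_eq, Multiset.coe_reverse]
  refine hperm.eq_of_pairwise' (Multiset.pairwise_sort _ _) ?_
  exact List.pairwise_reverse.2 (hl.imp le_of_add_le_left)

theorem hasGaps_reverse_iff_isChain {d : ℕ} {l : List ℕ} :
    HasGaps d l.reverse ↔ l.IsChain fun x y => x + d ≤ y := by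
  have : IsTrans ℕ fun x y => x + d ≤ y := ⟨fun x y z hxy hyz => by omega⟩
  rw [HasGaps, List.pairwise_reverse, List.isChain_iff_pairwise]

theorem gapCount_eq_card_gapLists {d a n : ℕ} (ha : 1 ≤ a) :
    gapCount d a n = Nat.card (gapLists d a n) := by
  refine Nat.card_eq_of_bijective
    (fun p => ⟨(p.1.parts.sort (· ≤ ·)).reverse,
      hasGaps_reverse_iff_isChain.2 p.2.2, fun x hx => p.2.1 x (by simpa using hx), ?_⟩) ⟨?_, ?_⟩
  · rw [List.sum_reverse, ← Multiset.sum_coe, Multiset.sort_eq, p.1.parts_sum]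
  · intro p q h
    have hsort := List.reverse_injective (congrArg Subtype.val h)
    refine Subtype.ext (Nat.Partition.ext ?_)
    rw [← Multiset.sort_eq p.1.parts (· ≤ ·), hsort, Multiset.sort_eq]
  · rintro ⟨l, hgaps, hle, hsum⟩
    refine ⟨⟨⟨l, fun hx => ha.trans (hle _ hx), hsum⟩, hle, ?_⟩, Subtype.ext ?_⟩
    · change List.IsChain _ _
      rw [hgaps.sort_coe, ← hasGaps_reverse_iff_isChain, List.reverse_reverse]
      exact hgaps
    · change ((l : Multiset ℕ).sort (· ≤ ·)).reverse = l
      rw [hgaps.sort_coe, List.reverse_reverse]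

/-- Scaling of a partition by `u`, with the remainder `r` added to the largest part; the empty
partition stays empty, so `r` is lost there. -/
def dilate (u r : ℕ) : List ℕ → List ℕ
  | [] => []
  | x :: l => (u * x + r) :: l.map (u * ·)

theorem map_div_dilate {u r : ℕ} (hr : r < u) (l : List ℕ) :
    (dilate u r l).map (· / u) = l := by
  have hu : 0 < u := Nat.zero_lt_of_lt hr
  cases l with
  | nil => rfl
  | cons x l =>
    simp [dilate, Nat.mul_add_div hu, Nat.div_eq_of_lt hr, Function.comp_def,
      Nat.mul_div_cancel_left _ hu]

theorem sum_dilate {u r : ℕ} {l : List ℕ} (h : l = [] → r = 0) :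
    (dilate u r l).sum = u * l.sum + r := by
  cases l with
  | nil => simp [dilate, h]
  | cons x l =>
    rw [dilate, List.sum_cons, List.sum_cons, List.sum_map_mul_left, List.map_id']
    ring

theorem exists_mul_le_of_mem_dilate {u r y : ℕ} {l : List ℕ} (hy : y ∈ dilate u r l) :
    ∃ x ∈ l, u * x ≤ y := by
  cases l with
  | nil => simp [dilate] at hy
  | cons x l =>
    rcases List.mem_cons.1 hy with rfl | hy
    · exact ⟨x, List.mem_cons_self, Nat.le_add_right _ _⟩
    · obtain ⟨z, hz, rfl⟩ := List.mem_map.1 hy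
      exact ⟨z, List.mem_cons_of_mem _ hz, le_rfl⟩

theorem HasGaps.dilate {u D : ℕ} {l : List ℕ} (hl : HasGaps D l) (r : ℕ) :
    HasGaps (u * D) (dilate u r l) := by
  have hmul {x y : ℕ} (h : y + D ≤ x) : u * y + u * D ≤ u * x := by
    rw [← mul_add]
    exact Nat.mul_le_mul_left u h
  cases l with
  | nil => exact List.Pairwise.nil
  | cons x l =>
    obtain ⟨hx, hl⟩ := List.pairwise_cons.1 hl
    refine List.pairwise_cons.2 ⟨fun y hy => ?_, List.pairwise_map.2 (hl.imp hmul)⟩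
    obtain ⟨z, hz, rfl⟩ := List.mem_map.1 hy
    exact (hmul (hx z hz)).trans (Nat.le_add_right _ _)

theorem gapCount_le_gapCount_mul_add {D b m d a u r : ℕ} (ha : 1 ≤ a) (hab : a ≤ u * b)
    (hd : d ≤ u * D) (hr : r < u) (hm : m = 0 → r = 0) :
    gapCount D b m ≤ gapCount d a (u * m + r) := by
  have hb : 1 ≤ b := Nat.pos_of_ne_zero (by rintro rfl; omega)
  rw [gapCount_eq_card_gapLists hb, gapCount_eq_card_gapLists ha]
  have := (finite_gapLists (d := d) (n := u * m + r) ha).to_subtype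
  refine Nat.card_le_card_of_injective (fun l => ⟨dilate u r l.1, ?_, ?_, ?_⟩) fun l l' h => ?_
  · exact (l.2.1.dilate r).imp (Nat.add_le_add_left hd _).trans
  · intro y hy
    obtain ⟨x, hx, hxy⟩ := exists_mul_le_of_mem_dilate hy
    exact hab.trans ((Nat.mul_le_mul_left u (l.2.2.1 x hx)).trans hxy)
  · rw [sum_dilate, l.2.2.2]
    exact fun hnil => hm (by simpa [hnil] using l.2.2.2.symm)
  · have hdilate : dilate u r l.1 = dilate u r l'.1 := congrArg Subtype.val h
    refine Subtype.ext ?_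
    rw [← map_div_dilate hr l.1, hdilate, map_div_dilate hr]

/-! ### Merging residue classes -/

/-- The representative of `x` modulo `M` in `{1, …, M}`, for `x` and `M` positive. Since `M` is
not represented by `0`, sums of residues up to `M` do not wrap around. -/
def residue (M x : ℕ) : ℕ :=
  (x - 1) % M + 1

theorem residue_eq_self {M b : ℕ} (hb : 0 < b) (hbM : b ≤ M) : residue M b = b := by
  rw [residue, Nat.mod_eq_of_lt (by omega)]
  omega

theorem residue_eq_of_modEq {M x b : ℕ} (hx : 0 < x) (hb : 0 < b) (hbM : b ≤ M)
    (h : x ≡ b [MOD M]) : residue M x = b := by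
  have hpred : x - 1 ≡ b - 1 [MOD M] :=
    Nat.ModEq.add_right_cancel' 1 (by rwa [Nat.sub_add_cancel hx, Nat.sub_add_cancel hb])
  rw [residue, hpred, Nat.mod_eq_of_lt (by omega)]
  omega

theorem residue_add_mul {M x : ℕ} (hx : 0 < x) (k : ℕ) : residue M (x + M * k) = residue M x := by
  rw [residue, Nat.sub_add_comm hx, Nat.add_mul_mod_self_left, residue]

theorem residue_add {M x v : ℕ} (hx : 0 < x) (h : residue M x + v ≤ M) :
    residue M (x + v) = residue M x + v := by
  obtain ⟨y, rfl⟩ := Nat.exists_eq_add_of_le' hx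
  simp only [residue, Nat.add_sub_cancel] at h ⊢
  rw [Nat.add_right_comm, Nat.add_sub_cancel, ← Nat.mod_add_mod, Nat.mod_eq_of_lt (by omega)]
  omega

theorem add_le_of_residue_eq {M x y : ℕ} (hy : 0 < y) (hyx : y < x)
    (h : residue M y = residue M x) : y + M ≤ x := by
  have hmod : y - 1 ≡ x - 1 [MOD M] := Nat.succ_injective h
  have := hmod.add_le_of_lt (by omega)
  omega

/-- The total that `lower M ds` takes away from the parts of `ds`. -/
def toll (M : ℕ) (ds : List ℕ) : ℕ :=
  (ds.map (min M)).sum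

/-- The partition `ds` with `M` subtracted from every part, parts up to `M` disappearing. -/
def lower (M : ℕ) (ds : List ℕ) : List ℕ :=
  (ds.map (· - M)).filter (0 < ·)

theorem lower_cons {M d : ℕ} {ds : List ℕ} :
    lower M (d :: ds) = if M < d then (d - M) :: lower M ds else lower M ds := by
  simp only [lower, List.map_cons, List.filter_cons, decide_eq_true_eq, Nat.sub_pos_iff_lt]

theorem toll_cons {M d : ℕ} {ds : List ℕ} : toll M (d :: ds) = min M d + toll M ds :=
  rfl

theorem toll_add_sum_lower (M : ℕ) (ds : List ℕ) : toll M ds + (lower M ds).sum = ds.sum := by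
  induction ds with
  | nil => rfl
  | cons d ds ih =>
    rw [toll_cons, lower_cons, List.sum_cons, ← ih]
    split
    · rw [List.sum_cons]
      omega
    · omega

theorem length_lower_le (M : ℕ) (ds : List ℕ) : (lower M ds).length ≤ ds.length :=
  (List.length_filter_le _ _).trans_eq (List.length_map _)

theorem toll_lower_le (M : ℕ) (ds : List ℕ) : toll M (lower M ds) ≤ toll M ds := by
  induction ds with
  | nil => rfl
  | cons d ds ih =>
    rw [toll_cons, lower_cons]
    split
    · rw [toll_cons]
      omega
    · omega

theorem pos_and_add_mem_of_mem_lower {M d : ℕ} {ds : List ℕ} (hd : d ∈ lower M ds) :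
    0 < d ∧ d + M ∈ ds := by
  obtain ⟨hd, hpos⟩ := List.mem_filter.1 hd
  obtain ⟨x, hx, rfl⟩ := List.mem_map.1 hd
  rw [decide_eq_true_eq] at hpos
  exact ⟨hpos, by rwa [Nat.sub_add_cancel (by omega)]⟩

theorem HasGaps.lower {M D : ℕ} {ds : List ℕ} (hds : HasGaps D ds) : HasGaps D (lower M ds) := by
  refine (List.pairwise_filter.2 (List.pairwise_map.2 (hds.imp fun {x y} h hx hy => ?_)))
  simp only [decide_eq_true_eq] at hx hy
  omega

/-- Merging of two partitions whose gaps are at least `M`. The largest part `c` of the second one is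
raised by the toll of the first and placed on top, unless the largest part of the first exceeds
even that. -/
def interleave (M : ℕ) : List ℕ → List ℕ → List ℕ
  | ds, [] => ds
  | [], c :: cs => c :: cs
  | d :: ds, c :: cs =>
    if c + toll M (d :: ds) < d then d :: interleave M ds (c :: cs)
    else (c + toll M (d :: ds)) :: interleave M (lower M (d :: ds)) cs
termination_by ds cs => ds.length + cs.length
decreasing_by
  · simp
  · have := length_lower_le M (d :: ds)
    simp only [List.length_cons] at this ⊢
    omega

theorem sum_interleave (M : ℕ) (ds cs : List ℕ) :
    (interleave M ds cs).sum = ds.sum + cs.sum := by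
  fun_induction interleave M ds cs with
  | case1 ds => simp
  | case2 c cs => simp
  | case3 d ds c cs _ ih =>
    rw [List.sum_cons, ih, List.sum_cons (a := d), add_assoc]
  | case4 d ds c cs _ ih =>
    rw [List.sum_cons, ih, ← toll_add_sum_lower M (d :: ds), List.sum_cons]
    ring

theorem add_le_of_mem_interleave {M K B : ℕ} {ds cs : List ℕ} (hds : ∀ d ∈ ds, d + K ≤ B)
    (hcs : ∀ c ∈ cs, c + toll M ds + K ≤ B) : ∀ o ∈ interleave M ds cs, o + K ≤ B := by
  fun_induction interleave M ds cs with
  | case1 ds => exact hds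
  | case2 c cs => simpa [toll] using hcs
  | case3 d ds c cs h ih =>
    obtain ⟨hd, hds⟩ := List.forall_mem_cons.1 hds
    refine List.forall_mem_cons.2 ⟨hd, ih hds fun x hx => ?_⟩
    have := hcs x hx
    rw [toll_cons] at this
    omega
  | case4 d ds c cs _ ih =>
    obtain ⟨hc, hcs⟩ := List.forall_mem_cons.1 hcs
    refine List.forall_mem_cons.2 ⟨hc, ih (fun x hx => ?_) fun x hx => ?_⟩
    · have := hds _ (pos_and_add_mem_of_mem_lower hx).2
      omega
    · have := hcs x hx
      have := toll_lower_le M (d :: ds)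
      omega

theorem HasGaps.interleave {M : ℕ} {ds cs : List ℕ} (hds : HasGaps M ds) (hcs : HasGaps M cs) :
    HasGaps M (interleave M ds cs) := by
  fun_induction _root_.interleave M ds cs with
  | case1 ds => exact hds
  | case2 c cs => exact hcs
  | case3 d ds c cs h ih =>
    obtain ⟨hd, hds⟩ := List.pairwise_cons.1 hds
    have hc := (List.pairwise_cons.1 hcs).1
    refine List.pairwise_cons.2 ⟨add_le_of_mem_interleave hd ?_, ih hds hcs⟩
    have htop : c + toll M ds + M ≤ d := by
      rw [toll_cons] at h
      omega
    refine List.forall_mem_cons.2 ⟨htop, fun x hx => ?_⟩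
    have := hc x hx
    omega
  | case4 d ds c cs _ ih =>
    obtain ⟨hc, hcs⟩ := List.pairwise_cons.1 hcs
    refine List.pairwise_cons.2 ⟨add_le_of_mem_interleave (fun x hx => ?_) fun x hx => ?_,
      ih hds.lower hcs⟩
    · have hle : ∀ y ∈ d :: ds, y ≤ d := List.forall_mem_cons.2
        ⟨le_rfl, fun y hy => le_of_add_le_left ((List.pairwise_cons.1 hds).1 y hy)⟩
      have := hle _ (pos_and_add_mem_of_mem_lower hx).2
      omega
    · have := hc x hx
      have := toll_lower_le M (d :: ds)
      omega

theorem eq_map_lower {M v : ℕ} {ds : List ℕ} (hgaps : HasGaps M ds)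
    (hds : ∀ d ∈ ds, 0 < d ∧ residue M d = v) :
    (ds = (lower M ds).map (· + M) ∧ toll M ds = M * (lower M ds).length) ∨
      (ds = (lower M ds).map (· + M) ++ [v] ∧ toll M ds = M * (lower M ds).length + v) := by
  induction ds with
  | nil => exact Or.inl ⟨rfl, rfl⟩
  | cons d ds ih =>
    obtain ⟨hgap, hgaps⟩ := List.pairwise_cons.1 hgaps
    obtain ⟨⟨hd, hdv⟩, hds⟩ := List.forall_mem_cons.1 hds
    rw [lower_cons, toll_cons]
    split_ifs with hMd
    · have hdM : d - M + M = d := Nat.sub_add_cancel hMd.le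
      rw [Nat.min_eq_left hMd.le, List.map_cons, hdM, List.length_cons, mul_add_one]
      refine (ih hgaps hds).imp (fun ⟨h, h'⟩ => ⟨by rw [← h], ?_⟩)
        fun ⟨h, h'⟩ => ⟨by rw [List.cons_append, ← h], ?_⟩
      · rw [h', add_comm]
      · rw [h', add_comm, add_right_comm]
    · have hdM : d ≤ M := Nat.le_of_not_lt hMd
      rw [residue_eq_self hd hdM] at hdv
      have hnil : ds = [] := List.eq_nil_iff_forall_not_mem.2 fun y hy => by
        have := hgap y hy
        have := (hds y hy).1
        omega
      subst hnil hdv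
      exact Or.inr ⟨rfl, by simp [toll, lower, hdM]⟩

theorem residue_of_mem_lower {M v : ℕ} {ds : List ℕ} (hds : ∀ d ∈ ds, 0 < d ∧ residue M d = v) :
    ∀ d ∈ lower M ds, 0 < d ∧ residue M d = v := by
  intro d hd
  obtain ⟨hpos, hmem⟩ := pos_and_add_mem_of_mem_lower hd
  refine ⟨hpos, ?_⟩
  rw [← (hds _ hmem).2, ← residue_add_mul hpos 1, mul_one]

theorem residue_add_toll {M v c : ℕ} {ds : List ℕ} (hv : 2 * v ≤ M + 1) (hgaps : HasGaps M ds)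
    (hds : ∀ d ∈ ds, 0 < d ∧ residue M d = v) (hc : 0 < c) (hcv : residue M c < v) :
    (ds = (lower M ds).map (· + M) ∧ residue M (c + toll M ds) = residue M c ∧
        c = c + toll M ds - M * (lower M ds).length) ∨
      (ds = (lower M ds).map (· + M) ++ [v] ∧ residue M (c + toll M ds) = residue M c + v ∧
        c = c + toll M ds - v - M * (lower M ds).length) := by
  refine (eq_map_lower hgaps hds).imp (fun ⟨h, h'⟩ => ⟨h, ?_, by omega⟩)
    fun ⟨h, h'⟩ => ⟨h, ?_, by omega⟩
  · rw [h', residue_add_mul hc]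
  · rw [h', ← add_assoc, residue_add (by omega), residue_add_mul hc]
    rw [residue_add_mul hc]
    omega

theorem residue_lt_of_mem_interleave {M v : ℕ} {ds cs : List ℕ} (hv : 2 * v ≤ M + 1)
    (hgaps : HasGaps M ds) (hds : ∀ d ∈ ds, 0 < d ∧ residue M d = v)
    (hcs : ∀ c ∈ cs, 0 < c ∧ residue M c < v) :
    ∀ o ∈ interleave M ds cs, 0 < o ∧ residue M o < 2 * v := by
  have hdouble {d : ℕ} (h : 0 < d ∧ residue M d = v) : 0 < d ∧ residue M d < 2 * v := by
    have : 0 < residue M d := Nat.succ_pos _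
    omega
  fun_induction interleave M ds cs with
  | case1 ds => exact fun d hd => hdouble (hds d hd)
  | case2 c cs => exact fun x hx => (hcs x hx).imp_right fun h => by omega
  | case3 d ds c cs _ ih =>
    obtain ⟨hd, hds⟩ := List.forall_mem_cons.1 hds
    exact List.forall_mem_cons.2 ⟨hdouble hd, ih hgaps.of_cons hds hcs⟩
  | case4 d ds c cs _ ih =>
    obtain ⟨⟨hc, hcv⟩, hcs⟩ := List.forall_mem_cons.1 hcs
    refine List.forall_mem_cons.2 ⟨⟨by omega, ?_⟩,
      ih hgaps.lower (residue_of_mem_lower hds) hcs⟩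
    rcases residue_add_toll hv hgaps hds hc hcv with ⟨-, h, -⟩ | ⟨-, h, -⟩ <;> omega

/-- The inverse of `interleave M` on pairs whose first member has all residues equal to `v` and
whose second one has smaller residues: a part of residue `v` comes from the first member, a raised
part has a residue below `v` if the toll was a multiple of `M`, and above `v` if a part `v` of the
first member was used up. -/
def deinterleave (M v : ℕ) : List ℕ → List ℕ × List ℕ
  | [] => ([], [])
  | o :: os =>
    let (ds, cs) := deinterleave M v os
    if residue M o = v then (o :: ds, cs)
    else if residue M o < v then (ds.map (· + M), (o - M * ds.length) :: cs)
    else (ds.map (· + M) ++ [v], (o - v - M * ds.length) :: cs)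

theorem deinterleave_of_residue_eq {M v : ℕ} {ds : List ℕ}
    (hds : ∀ d ∈ ds, residue M d = v) : deinterleave M v ds = (ds, []) := by
  induction ds with
  | nil => rfl
  | cons d ds ih =>
    obtain ⟨hd, hds⟩ := List.forall_mem_cons.1 hds
    simp only [deinterleave, ih hds, if_pos hd]

theorem deinterleave_of_residue_lt {M v : ℕ} {cs : List ℕ}
    (hcs : ∀ c ∈ cs, residue M c < v) : deinterleave M v cs = ([], cs) := by
  induction cs with
  | nil => rfl
  | cons c cs ih =>
    obtain ⟨hc, hcs⟩ := List.forall_mem_cons.1 hcs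
    simp [deinterleave, ih hcs, hc.ne, hc]

theorem deinterleave_interleave {M v : ℕ} {ds cs : List ℕ} (hv : 2 * v ≤ M + 1)
    (hgaps : HasGaps M ds) (hds : ∀ d ∈ ds, 0 < d ∧ residue M d = v)
    (hcs : ∀ c ∈ cs, 0 < c ∧ residue M c < v) :
    deinterleave M v (interleave M ds cs) = (ds, cs) := by
  fun_induction interleave M ds cs with
  | case1 ds => exact deinterleave_of_residue_eq fun d hd => (hds d hd).2
  | case2 c cs => exact deinterleave_of_residue_lt fun x hx => (hcs x hx).2
  | case3 d ds c cs _ ih =>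
    obtain ⟨⟨-, hd⟩, hds⟩ := List.forall_mem_cons.1 hds
    simp only [deinterleave, ih hgaps.of_cons hds hcs, if_pos hd]
  | case4 d ds c cs _ ih =>
    obtain ⟨⟨hc, hcv⟩, hcs⟩ := List.forall_mem_cons.1 hcs
    have hpos : 0 < residue M c := Nat.succ_pos _
    simp only [deinterleave, ih hgaps.lower (residue_of_mem_lower hds) hcs]
    rcases residue_add_toll hv hgaps hds hc hcv with ⟨hds', hres, hundo⟩ | ⟨hds', hres, hundo⟩
    · rw [hres, if_neg hcv.ne, if_pos hcv, ← hds', ← hundo]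
    · rw [hres, if_neg (by omega), if_neg (by omega), ← hds', ← hundo]

/-- The elements of `X` in the residue class of `v`, in decreasing order. -/
noncomputable def layer (M : ℕ) (X : Finset ℕ) (v : ℕ) : List ℕ :=
  (X.filter (residue M · = v)).sort (· ≥ ·)

theorem mem_layer {M v x : ℕ} {X : Finset ℕ} : x ∈ layer M X v ↔ x ∈ X ∧ residue M x = v := by
  rw [layer, Finset.mem_sort, Finset.mem_filter]

theorem hasGaps_layer {M v : ℕ} {X : Finset ℕ} (hX : ∀ x ∈ X, 0 < x) :
    HasGaps M (layer M X v) :=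
  (Finset.sortedGT_sort _).pairwise.imp_of_mem fun {x y} hx hy hxy => by
    obtain ⟨-, hxv⟩ := mem_layer.1 hx
    obtain ⟨hyX, hyv⟩ := mem_layer.1 hy
    exact add_le_of_residue_eq (hX y hyX) hxy (hyv.trans hxv.symm)

theorem sum_layer {M v : ℕ} {X : Finset ℕ} :
    (layer M X v).sum = ∑ x ∈ X with residue M x = v, x := by
  rw [layer, ← Multiset.sum_coe, Finset.sort_eq, Finset.sum, Multiset.map_id']

/-- The layers of `X` of residues `1, 2, 4, …, 2 ^ (k - 1)`, merged in this order. -/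
noncomputable def interleaveLayers (M : ℕ) (X : Finset ℕ) : ℕ → List ℕ
  | 0 => []
  | k + 1 => interleave M (layer M X (2 ^ k)) (interleaveLayers M X k)

theorem sum_interleaveLayers (M : ℕ) (X : Finset ℕ) (k : ℕ) :
    (interleaveLayers M X k).sum =
      ∑ i ∈ Finset.range k, ∑ x ∈ X with residue M x = 2 ^ i, x := by
  induction k with
  | zero => rfl
  | succ k ih =>
    rw [interleaveLayers, sum_interleave, ih, sum_layer, Finset.sum_range_succ, add_comm]

theorem hasGaps_interleaveLayers {M : ℕ} {X : Finset ℕ} (hX : ∀ x ∈ X, 0 < x) (k : ℕ) :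
    HasGaps M (interleaveLayers M X k) := by
  induction k with
  | zero => exact List.Pairwise.nil
  | succ k ih => exact (hasGaps_layer hX).interleave ih

theorem pos_and_residue_of_mem_layer {M v : ℕ} {X : Finset ℕ} (hX : ∀ x ∈ X, 0 < x) :
    ∀ x ∈ layer M X v, 0 < x ∧ residue M x = v :=
  fun x hx => (mem_layer.1 hx).imp_left (hX x)

theorem residue_lt_of_mem_interleaveLayers {M k : ℕ} {X : Finset ℕ} (hk : 2 ^ k ≤ M + 1)
    (hX : ∀ x ∈ X, 0 < x) : ∀ o ∈ interleaveLayers M X k, 0 < o ∧ residue M o < 2 ^ k := by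
  induction k with
  | zero => exact fun o ho => absurd ho List.not_mem_nil
  | succ k ih =>
    rw [pow_succ'] at hk ⊢
    exact residue_lt_of_mem_interleave hk (hasGaps_layer hX) (pos_and_residue_of_mem_layer hX)
      (ih (by omega))

theorem layer_eq_of_interleaveLayers_eq {M k : ℕ} {X Y : Finset ℕ} (hk : 2 ^ k ≤ M + 1)
    (hX : ∀ x ∈ X, 0 < x) (hY : ∀ y ∈ Y, 0 < y)
    (h : interleaveLayers M X k = interleaveLayers M Y k) :
    ∀ i < k, layer M X (2 ^ i) = layer M Y (2 ^ i) := by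
  induction k with
  | zero => exact fun i hi => absurd hi i.not_lt_zero
  | succ k ih =>
    have hk' : 2 ^ k ≤ M + 1 := (Nat.pow_le_pow_right two_pos k.le_succ).trans hk
    have hsplit {Z : Finset ℕ} (hZ : ∀ z ∈ Z, 0 < z) :
        deinterleave M (2 ^ k) (interleaveLayers M Z (k + 1)) =
          (layer M Z (2 ^ k), interleaveLayers M Z k) :=
      deinterleave_interleave (by rwa [pow_succ'] at hk) (hasGaps_layer hZ)
        (pos_and_residue_of_mem_layer hZ) (residue_lt_of_mem_interleaveLayers hk' hZ)
    obtain ⟨hlayer, hrest⟩ := Prod.mk.inj ((hsplit hX).symm.trans (h ▸ hsplit hY))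
    intro i hi
    rcases Nat.lt_succ_iff_lt_or_eq.1 hi with hi | rfl
    · exact ih hk' hrest i hi
    · exact hlayer

theorem interleaveLayers_injOn {M k : ℕ} (hk : 2 ^ k ≤ M + 1) :
    Set.InjOn (interleaveLayers M · k)
      {X : Finset ℕ | ∀ x ∈ X, 0 < x ∧ ∃ i < k, residue M x = 2 ^ i} := by
  have hsub {X Y : Finset ℕ} (hX : ∀ x ∈ X, 0 < x ∧ ∃ i < k, residue M x = 2 ^ i)
      (h : ∀ i < k, layer M X (2 ^ i) = layer M Y (2 ^ i)) : X ⊆ Y := by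
    intro x hx
    obtain ⟨-, i, hi, hxi⟩ := hX x hx
    exact (mem_layer.1 (h i hi ▸ mem_layer.2 ⟨hx, hxi⟩)).1
  intro X hX Y hY h
  have hlayer := layer_eq_of_interleaveLayers_eq hk (fun x hx => (hX x hx).1)
    (fun y hy => (hY y hy).1) h
  exact (hsub hX hlayer).antisymm (hsub hY fun i hi => (hlayer i hi).symm)

theorem sum_interleaveLayers_eq_sum {M k : ℕ} {X : Finset ℕ}
    (hX : ∀ x ∈ X, ∃ i < k, residue M x = 2 ^ i) :
    (interleaveLayers M X k).sum = ∑ x ∈ X, x := by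
  have hmaps : ∀ x ∈ X, residue M x ∈ (Finset.range k).image (2 ^ ·) := fun x hx => by
    obtain ⟨i, hi, hxi⟩ := hX x hx
    exact Finset.mem_image.2 ⟨i, Finset.mem_range.2 hi, hxi.symm⟩
  rw [sum_interleaveLayers, ← Finset.sum_fiberwise_of_maps_to hmaps,
    Finset.sum_image (Nat.pow_right_injective le_rfl).injOn]

/-! ### Odd parts congruent to powers of two -/

theorem two_pow_mul_odd_inj {e e' t t' : ℕ} (ht : Odd t) (ht' : Odd t') :
    2 ^ e * t = 2 ^ e' * t' ↔ e = e' ∧ t = t' := by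
  refine ⟨fun h => ?_, fun ⟨he, h⟩ => he ▸ h ▸ rfl⟩
  obtain rfl : t = t' := by
    rw [← Nat.ordCompl_pow_mul_of_not_dvd e Nat.prime_two ht.not_two_dvd_nat, h,
      Nat.ordCompl_pow_mul_of_not_dvd e' Nat.prime_two ht'.not_two_dvd_nat]
  exact ⟨Nat.pow_right_injective le_rfl (Nat.eq_of_mul_eq_mul_right ht.pos h), rfl⟩

/-- Glaisher's map from partitions into odd parts to partitions into distinct parts: the copies of
`t` are grouped into parts `2 ^ e * t` along the binary expansion of their number. -/
def glaisher (B : Multiset ℕ) : Finset ℕ :=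
  B.toFinset.biUnion fun t => (B.count t).bitIndices.toFinset.image fun e => 2 ^ e * t

theorem mem_glaisher {B : Multiset ℕ} {y : ℕ} :
    y ∈ glaisher B ↔ ∃ t ∈ B, ∃ e ∈ (B.count t).bitIndices, 2 ^ e * t = y := by
  simp only [glaisher, Finset.mem_biUnion, Finset.mem_image, Multiset.mem_toFinset,
    List.mem_toFinset]

theorem two_pow_mul_mem_glaisher {B : Multiset ℕ} (hB : ∀ t ∈ B, Odd t) {e t : ℕ} (ht : Odd t) :
    2 ^ e * t ∈ glaisher B ↔ e ∈ (B.count t).bitIndices := by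
  rw [mem_glaisher]
  constructor
  · rintro ⟨t', ht', e', he', h⟩
    obtain ⟨rfl, rfl⟩ := (two_pow_mul_odd_inj (hB t' ht') ht).1 h
    exact he'
  · intro he
    refine ⟨t, ?_, e, he, rfl⟩
    by_contra hmem
    simp [Multiset.count_eq_zero_of_notMem hmem] at he

theorem glaisher_injOn : Set.InjOn glaisher {B | ∀ t ∈ B, Odd t} := by
  intro B hB B' hB' h
  ext t
  by_cases ht : Odd t
  · refine Nat.eq_of_testBit_eq fun e => ?_
    rw [Bool.eq_iff_iff, ← Nat.mem_bitIndices, ← Nat.mem_bitIndices,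
      ← two_pow_mul_mem_glaisher hB ht, ← two_pow_mul_mem_glaisher hB' ht, h]
  · rw [Multiset.count_eq_zero_of_notMem fun h => ht (hB t h),
      Multiset.count_eq_zero_of_notMem fun h => ht (hB' t h)]

theorem sum_glaisher {B : Multiset ℕ} (hB : ∀ t ∈ B, Odd t) : ∑ y ∈ glaisher B, y = B.sum := by
  rw [glaisher, Finset.sum_biUnion, Finset.sum_multiset_count]
  · refine Finset.sum_congr rfl fun t ht => ?_
    have hodd := hB t (Multiset.mem_toFinset.1 ht)
    rw [Finset.sum_image fun e _ e' _ h => ((two_pow_mul_odd_inj hodd hodd).1 h).1,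
      ← Finset.sum_mul, Finset.sum_toFinset_bitIndices_two_pow, smul_eq_mul]
  · intro t ht t' ht' hne
    refine Finset.disjoint_left.2 fun y hy hy' => hne ?_
    obtain ⟨e, -, rfl⟩ := Finset.mem_image.1 hy
    obtain ⟨e', -, h⟩ := Finset.mem_image.1 hy'
    exact ((two_pow_mul_odd_inj (hB t' (Multiset.mem_toFinset.1 ht'))
      (hB t (Multiset.mem_toFinset.1 ht))).1 h).2.symm

/-- The odd numbers congruent to a power of two modulo `2 ^ s - 1`. -/
def oddPowTwoResidues (s : ℕ) : Set ℕ :=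
  {t | Odd t ∧ ∃ i, t ≡ 2 ^ i [MOD 2 ^ s - 1]}

theorem two_pow_modEq_two_pow_mod (s i : ℕ) : 2 ^ i ≡ 2 ^ (i % s) [MOD 2 ^ s - 1] := by
  have hone : 2 ^ s ≡ 1 [MOD 2 ^ s - 1] :=
    ((Nat.modEq_iff_dvd' Nat.one_le_two_pow).2 dvd_rfl).symm
  calc 2 ^ i = (2 ^ s) ^ (i / s) * 2 ^ (i % s) := by rw [← pow_mul, ← pow_add, Nat.div_add_mod]
    _ ≡ 1 ^ (i / s) * 2 ^ (i % s) [MOD 2 ^ s - 1] := (hone.pow _).mul_right _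
    _ = 2 ^ (i % s) := by rw [one_pow, one_mul]

theorem exists_residue_eq_two_pow {s x i : ℕ} (hs : 0 < s) (hx : 0 < x)
    (h : x ≡ 2 ^ i [MOD 2 ^ s - 1]) : ∃ j < s, residue (2 ^ s - 1) x = 2 ^ j := by
  have hlt : i % s < s := Nat.mod_lt i hs
  exact ⟨i % s, hlt, residue_eq_of_modEq hx (Nat.two_pow_pos _)
    (Nat.le_sub_one_of_lt (Nat.pow_lt_pow_right one_lt_two hlt))
    (h.trans (two_pow_modEq_two_pow_mod s i))⟩

theorem residue_of_mem_glaisher {s : ℕ} (hs : 0 < s) {B : Multiset ℕ}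
    (hB : ∀ t ∈ B, t ∈ oddPowTwoResidues s) :
    ∀ y ∈ glaisher B, 0 < y ∧ ∃ i < s, residue (2 ^ s - 1) y = 2 ^ i := by
  intro y hy
  obtain ⟨t, ht, e, -, rfl⟩ := mem_glaisher.1 hy
  obtain ⟨hodd, i, hi⟩ := hB t ht
  have hpos : 0 < 2 ^ e * t := Nat.mul_pos (Nat.two_pow_pos e) hodd.pos
  exact ⟨hpos, exists_residue_eq_two_pow hs hpos (pow_add 2 e i ▸ hi.mul_left (2 ^ e))⟩

theorem rhoCount_oddPowTwoResidues_le_gapCount {s : ℕ} (hs : 0 < s) (n : ℕ) :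
    rhoCount (oddPowTwoResidues s) n ≤ gapCount (2 ^ s - 1) 1 n := by
  rw [gapCount_eq_card_gapLists le_rfl]
  have := (finite_gapLists (d := 2 ^ s - 1) (n := n) le_rfl).to_subtype
  have hM : 2 ^ s ≤ 2 ^ s - 1 + 1 := by omega
  refine Nat.card_le_card_of_injective
    (fun p => ⟨interleaveLayers (2 ^ s - 1) (glaisher p.1.parts) s, ?_, ?_, ?_⟩) fun p q h => ?_
  · exact hasGaps_interleaveLayers (fun y hy => (residue_of_mem_glaisher hs p.2 y hy).1) s
  · exact fun o ho => (residue_lt_of_mem_interleaveLayers hM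
      (fun y hy => (residue_of_mem_glaisher hs p.2 y hy).1) o ho).1
  · rw [sum_interleaveLayers_eq_sum fun y hy => (residue_of_mem_glaisher hs p.2 y hy).2,
      sum_glaisher fun t ht => (p.2 t ht).1, p.1.parts_sum]
  · have hglaisher := interleaveLayers_injOn hM (residue_of_mem_glaisher hs p.2)
      (residue_of_mem_glaisher hs q.2) (congrArg Subtype.val h)
    exact Subtype.ext (Nat.Partition.ext (glaisher_injOn (fun t ht => (p.2 t ht).1)
      (fun t ht => (q.2 t ht).1) hglaisher))

/-! ### Replacing parts by smaller ones -/

theorem rhoCount_eq_zero_of_lt {R : Set ℕ} {u n : ℕ} (hR : ∀ x ∈ R, u ≤ x) (hn : n ≠ 0)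
    (hnu : n < u) : rhoCount R n = 0 := by
  refine Nat.card_eq_zero.2 (Or.inl ⟨fun ⟨p, hp⟩ => hn ?_⟩)
  have hnil : p.parts = 0 := Multiset.eq_zero_of_forall_notMem fun x hx => by
    have hxn : x ≤ n := p.parts_sum ▸ Multiset.le_sum_of_mem hx
    have := hR x (hp x hx)
    omega
  rw [← p.parts_sum, hnil, Multiset.sum_zero]

theorem partition_eq_of_filter_ne_eq {n s : ℕ} (hs : 0 < s) {p q : n.Partition}
    (h : p.parts.filter (· ≠ s) = q.parts.filter (· ≠ s)) : p = q := by
  have hsplit (p : n.Partition) :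
      Multiset.replicate (p.parts.count s) s + p.parts.filter (· ≠ s) = p.parts := by
    rw [← Multiset.filter_eq', Multiset.filter_add_not]
  have hsum (p : n.Partition) : p.parts.count s * s + (p.parts.filter (· ≠ s)).sum = n := by
    rw [← smul_eq_mul, ← Multiset.sum_replicate, ← Multiset.sum_add, hsplit, p.parts_sum]
  have hcount : p.parts.count s = q.parts.count s :=
    Nat.eq_of_mul_eq_mul_right hs (Nat.add_right_cancel ((hsum p).trans (h ▸ (hsum q).symm)))
  refine Nat.Partition.ext ?_
  rw [← hsplit p, ← hsplit q, h, hcount]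

theorem multiset_map_injOn {α β : Type*} {f : α → β} {R : Set α} (hf : Set.InjOn f R) :
    Set.InjOn (Multiset.map f) {A | ∀ x ∈ A, x ∈ R} := by
  rcases isEmpty_or_nonempty α with _ | _
  · exact fun A _ A' _ _ => Subsingleton.elim A A'
  refine Set.LeftInvOn.injOn (f₁' := Multiset.map (Function.invFunOn f R)) fun A hA => ?_
  have hinv : ∀ x ∈ A, (Function.invFunOn f R ∘ f) x = id x := fun x hx =>
    hf.leftInvOn_invFunOn (hA x hx)
  rw [Multiset.map_map, Multiset.map_congr rfl hinv, Multiset.map_id]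

/-- The multiset `A` filled up with ones to a partition of `m`, provided that `A.sum ≤ m`. -/
def padOnes (m : ℕ) (A : Multiset ℕ) : Multiset ℕ :=
  A + Multiset.replicate (m - A.sum) 1

theorem sum_padOnes {m : ℕ} {A : Multiset ℕ} (hA : A.sum ≤ m) : (padOnes m A).sum = m := by
  rw [padOnes, Multiset.sum_add, Multiset.sum_replicate, smul_eq_mul, mul_one,
    Nat.add_sub_of_le hA]

theorem mem_of_mem_padOnes {m : ℕ} {A : Multiset ℕ} {T : Set ℕ} (hone : 1 ∈ T)
    (hA : ∀ t ∈ A, t ∈ T) : ∀ t ∈ padOnes m A, t ∈ T := by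
  intro t ht
  rcases Multiset.mem_add.1 ht with ht | ht
  · exact hA t ht
  · rwa [Multiset.eq_of_mem_replicate ht]

theorem padOnes_injOn (m : ℕ) : Set.InjOn (padOnes m) {A | ∀ t ∈ A, t ≠ 1} := by
  refine Set.LeftInvOn.injOn (f₁' := Multiset.filter (· ≠ 1)) fun A hA => ?_
  rw [padOnes, Multiset.filter_add, Multiset.filter_eq_self.2 hA, Multiset.filter_eq_nil.2,
    add_zero]
  exact fun t ht => not_not_intro (Multiset.eq_of_mem_replicate ht)

theorem sum_map_filter_le_div {n u : ℕ} (hu : 0 < u) {P : ℕ → Prop} [DecidablePred P]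
    {φ : ℕ → ℕ} (p : n.Partition) (hφ : ∀ x ∈ p.parts, P x → u * φ x ≤ x) :
    ((p.parts.filter P).map φ).sum ≤ n / u := by
  rw [Nat.le_div_iff_mul_le hu, mul_comm, ← Multiset.sum_map_mul_left]
  calc ((p.parts.filter P).map fun x => u * φ x).sum
      ≤ ((p.parts.filter P).map id).sum :=
        Multiset.sum_map_le_sum_map _ _ fun x hx =>
          hφ x (Multiset.mem_of_mem_filter hx) (Multiset.of_mem_filter hx)
    _ ≤ ((p.parts.filter P).map id).sum + ((p.parts.filter (¬ P ·)).map id).sum :=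
        Nat.le_add_right _ _
    _ = n := by
        rw [← Multiset.sum_add, ← Multiset.map_add, Multiset.filter_add_not, Multiset.map_id,
          p.parts_sum]

theorem rhoCount_le_rhoCount_div {S T : Set ℕ} {s u n : ℕ} {φ : ℕ → ℕ} (hs : 0 < s) (hu : 0 < u)
    (hzero : 0 ∉ T) (hone : 1 ∈ T) (hmaps : Set.MapsTo φ (S \ {s}) (T \ {1}))
    (hle : ∀ x ∈ S \ {s}, u * φ x ≤ x) (hinj : Set.InjOn φ (S \ {s})) :
    rhoCount S n ≤ rhoCount T (n / u) := by
  have hmem (p : {p : n.Partition // ∀ x ∈ p.parts, x ∈ S}) :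
      ∀ x ∈ p.1.parts.filter (· ≠ s), x ∈ S \ {s} := fun x hx =>
    (Multiset.mem_filter.1 hx).imp_left (p.2 x)
  have hmap (p : {p : n.Partition // ∀ x ∈ p.parts, x ∈ S}) :
      ∀ t ∈ (p.1.parts.filter (· ≠ s)).map φ, t ∈ T \ {1} := fun t ht => by
    obtain ⟨x, hx, rfl⟩ := Multiset.mem_map.1 ht
    exact hmaps (hmem p x hx)
  have hT (p : {p : n.Partition // ∀ x ∈ p.parts, x ∈ S}) :
      ∀ t ∈ padOnes (n / u) ((p.1.parts.filter (· ≠ s)).map φ), t ∈ T :=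
    mem_of_mem_padOnes hone fun t ht => (hmap p t ht).1
  refine Nat.card_le_card_of_injective (fun p =>
    ⟨⟨padOnes (n / u) ((p.1.parts.filter (· ≠ s)).map φ), fun ht => ?_, sum_padOnes ?_⟩, hT p⟩)
    fun p q h => ?_
  · exact Nat.pos_of_ne_zero (ne_of_mem_of_not_mem (hT p _ ht) hzero)
  · exact sum_map_filter_le_div hu p.1 fun x hx hxs => hle x ⟨p.2 x hx, hxs⟩
  · have hpad := congrArg (Nat.Partition.parts ∘ Subtype.val) h
    have hlabels := padOnes_injOn (n / u) (fun t ht => (hmap p t ht).2)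
      (fun t ht => (hmap q t ht).2) hpad
    exact Subtype.ext (partition_eq_of_filter_ne_eq hs
      (multiset_map_injOn hinj (hmem p) (hmem q) hlabels))

/-! ### The parts congruent to `a` or `-a` -/

/-- The `k`-th smallest, from `k = 0`, of the numbers `(2 ^ s - 1) * (2 * j + 1) + 2 ^ e` with
`1 ≤ e ≤ s`; they are the labels given to admissible parts. -/
def oddLabel (s k : ℕ) : ℕ :=
  (2 ^ s - 1) * (2 * (k / s) + 1) + 2 ^ (k % s + 1)

theorem one_lt_oddLabel (s k : ℕ) : 1 < oddLabel s k :=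
  (Nat.one_lt_two_pow (Nat.succ_ne_zero _)).trans_le (Nat.le_add_left _ _)

theorem oddLabel_mem_oddPowTwoResidues {s : ℕ} (hs : 0 < s) (k : ℕ) :
    oddLabel s k ∈ oddPowTwoResidues s := by
  have hodd : Odd (2 ^ s - 1) :=
    Nat.Even.sub_odd Nat.one_le_two_pow (even_two.pow_of_ne_zero hs.ne') odd_one
  have heven : Even (2 ^ (k % s + 1)) := even_two.pow_of_ne_zero (Nat.succ_ne_zero _)
  exact ⟨(hodd.mul (odd_two_mul_add_one _)).add_even heven, k % s + 1, Nat.mul_add_mod _ _ _⟩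

theorem oddLabel_sub_two_div {s : ℕ} (hs : 0 < s) (k : ℕ) :
    (oddLabel s k - 2) / (2 ^ s - 1) = 2 * (k / s) + 1 := by
  have hlow : 2 ≤ 2 ^ (k % s + 1) := Nat.le_self_pow (Nat.succ_ne_zero _) 2
  have hhigh : 2 ^ (k % s + 1) ≤ 2 ^ s := Nat.pow_le_pow_right two_pos (Nat.mod_lt k hs)
  have hlt : 2 ^ (k % s + 1) - 2 < 2 ^ s - 1 := by omega
  rw [oddLabel, Nat.add_sub_assoc hlow, Nat.mul_add_div (Nat.zero_lt_of_lt hlt),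
    Nat.div_eq_of_lt hlt, Nat.add_zero]

theorem oddLabel_injective {s : ℕ} (hs : 0 < s) : Function.Injective (oddLabel s) := by
  intro k l h
  have hdiv : k / s = l / s := by
    have := oddLabel_sub_two_div hs k
    rw [h, oddLabel_sub_two_div hs] at this
    omega
  rw [oddLabel, oddLabel, hdiv] at h
  have hmod : k % s = l % s :=
    Nat.succ_injective (Nat.pow_right_injective le_rfl (Nat.add_left_cancel h))
  rw [← Nat.div_add_mod k s, hdiv, hmod, Nat.div_add_mod]

theorem two_mul_mul_oddLabel_five_le {u w : ℕ} (hu : 5 ≤ u) (hw : 31 * u ≤ w + 27) (k : ℕ) :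
    2 * u * oddLabel 5 k ≤ (k + 3) * w := by
  obtain ⟨j, e, he, rfl⟩ : ∃ j e, e < 5 ∧ k = 5 * j + e :=
    ⟨k / 5, k % 5, Nat.mod_lt k (by norm_num), (Nat.div_add_mod k 5).symm⟩
  have hdiv : (5 * j + e) / 5 = j := by omega
  have hmod : (5 * j + e) % 5 = e := by omega
  rw [oddLabel, hdiv, hmod]
  have hslope : 124 * u * j ≤ 5 * w * j := Nat.mul_le_mul_right j (by omega)
  have hbase : 2 * u * (31 + 2 ^ (e + 1)) ≤ (e + 3) * w := by interval_cases e <;> omega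
  calc 2 * u * ((2 ^ 5 - 1) * (2 * j + 1) + 2 ^ (e + 1))
      = 124 * u * j + 2 * u * (31 + 2 ^ (e + 1)) := by norm_num; ring
    _ ≤ 5 * w * j + (e + 3) * w := Nat.add_le_add hslope hbase
    _ = (5 * j + e + 3) * w := by ring

/-- The parts allowed in `congMinusMinusCount d a`, with `w = d + 3`. -/
def admissibleParts (w a : ℕ) : Set ℕ :=
  {x | (x ≡ a [MOD w] ∨ x + a ≡ 0 [MOD w]) ∧ x ≠ a ∧ x ≠ w - a}

theorem congMinusMinusCount_eq_rhoCount (d a n : ℕ) :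
    congMinusMinusCount d a n = rhoCount (admissibleParts (d + 3) a) n := by
  simp only [congMinusMinusCount, rhoCount, admissibleParts, Set.mem_ofPred_eq, forall_and]

theorem two_mul_div_cases {w a x : ℕ} (ha : 0 < a) (haw : 2 * a < w)
    (hx : x ≡ a [MOD w] ∨ x + a ≡ 0 [MOD w]) :
    (∃ k, x = k * w + a ∧ 2 * x / w = 2 * k) ∨
      ∃ k, x + a = (k + 1) * w ∧ 2 * x / w = 2 * k + 1 := by
  rcases hx with hx | hx
  · have hmod : x % w = a := Nat.mod_eq_of_modEq hx (by omega)
    have hxk : x = x / w * w + a := hmod ▸ (Nat.div_add_mod' x w).symm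
    refine Or.inl ⟨x / w, hxk, Nat.div_eq_of_lt_le ?_ ?_⟩ <;> linarith
  · obtain ⟨_ | k, hk⟩ := (Nat.modEq_zero_iff_dvd).1 hx
    · omega
    · refine Or.inr ⟨k, by rw [hk, mul_comm], Nat.div_eq_of_lt_le ?_ ?_⟩ <;> linarith

theorem two_mul_div_injOn_admissibleParts {w a : ℕ} (ha : 0 < a) (haw : 2 * a < w) :
    Set.InjOn (2 * · / w) (admissibleParts w a) := by
  intro x hx y hy (hxy : 2 * x / w = 2 * y / w)
  rcases two_mul_div_cases ha haw hx.1 with ⟨k, hk, hk'⟩ | ⟨k, hk, hk'⟩ <;>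
    rcases two_mul_div_cases ha haw hy.1 with ⟨l, hl, hl'⟩ | ⟨l, hl, hl'⟩ <;>
    first
    | omega
    | obtain rfl : k = l := by omega
      omega

theorem three_le_two_mul_div {w a x : ℕ} (ha : 0 < a) (haw : 2 * a < w)
    (hx : x ∈ admissibleParts w a \ {w + a}) : 3 ≤ 2 * x / w := by
  obtain ⟨⟨hx, hxa, hxw⟩, hne : x ≠ w + a⟩ := hx
  rcases two_mul_div_cases ha haw hx with ⟨_ | _ | k, hk, hk'⟩ | ⟨_ | k, hk, hk'⟩ <;> omega

theorem le_add_of_mem_admissibleParts {w a x : ℕ} (ha : 0 < a) (haw : 2 * a < w)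
    (hx : x ∈ admissibleParts w a) : w ≤ x + a := by
  obtain ⟨hx, hxa, -⟩ := hx
  rcases two_mul_div_cases ha haw hx with ⟨_ | k, hk, -⟩ | ⟨k, hk, -⟩
  · omega
  · linarith [Nat.le_mul_of_pos_left w k.succ_pos]
  · exact hk ▸ Nat.le_mul_of_pos_left w k.succ_pos

theorem rhoCount_admissibleParts_le {w a u : ℕ} (ha : 0 < a) (haw : 2 * a < w) (hu : 5 ≤ u)
    (huw : 31 * u ≤ w + 27) (n : ℕ) :
    rhoCount (admissibleParts w a) n ≤ rhoCount (oddPowTwoResidues 5) (n / u) := by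
  refine rhoCount_le_rhoCount_div (s := w + a) (φ := fun x => oddLabel 5 (2 * x / w - 3))
    (by omega) (by omega) (fun h => Nat.not_odd_zero h.1) ⟨odd_one, 0, rfl⟩
    (fun x _ => ⟨oddLabel_mem_oddPowTwoResidues (by norm_num) _, (one_lt_oddLabel 5 _).ne'⟩)
    (fun x hx => ?_) fun x hx y hy h => ?_
  · have hgrowth := two_mul_mul_oddLabel_five_le hu huw (2 * x / w - 3)
    rw [Nat.sub_add_cancel (three_le_two_mul_div ha haw hx)] at hgrowth
    linarith [Nat.div_mul_le_self (2 * x) w]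
  · have hx3 := three_le_two_mul_div ha haw hx
    have hy3 := three_le_two_mul_div ha haw hy
    have hk := oddLabel_injective (by norm_num) h
    exact two_mul_div_injOn_admissibleParts ha haw hx.1 hy.1 (by dsimp only; omega)

theorem stmt3_general (d n a : ℕ) (ha : 1 ≤ a) (hd : 125 ≤ d) (had : 31 * a ≤ d + 30) :
    congMinusMinusCount d a n ≤ gapCount d a n := by
  obtain ⟨u, hdu, hud⟩ : ∃ u, d ≤ 31 * u ∧ 31 * u ≤ d + 30 :=
    ⟨(d + 30) / 31, by omega, by omega⟩
  have hau : a ≤ u := by omega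
  have hun : n % u < u := Nat.mod_lt n (by omega)
  rw [congMinusMinusCount_eq_rhoCount]
  by_cases hr : n / u = 0 → n % u = 0
  · calc rhoCount (admissibleParts (d + 3) a) n
        ≤ rhoCount (oddPowTwoResidues 5) (n / u) :=
          rhoCount_admissibleParts_le ha (by omega) (by omega) (by omega) n
      _ ≤ gapCount (2 ^ 5 - 1) 1 (n / u) :=
          rhoCount_oddPowTwoResidues_le_gapCount (by norm_num) _
      _ ≤ gapCount d a (u * (n / u) + n % u) :=
          gapCount_le_gapCount_mul_add ha (by omega) (by omega) hun hr
      _ = gapCount d a n := by rw [Nat.div_add_mod]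
  · obtain ⟨hdiv, hmod⟩ := Classical.not_imp.1 hr
    have hnu : n < u := (Nat.div_eq_zero_iff.1 hdiv).resolve_left (by omega)
    have hparts : ∀ x ∈ admissibleParts (d + 3) a, u ≤ x := fun x hx => by
      have := le_add_of_mem_admissibleParts ha (by omega) hx
      omega
    rw [rhoCount_eq_zero_of_lt hparts (fun h => hmod (by simp [h])) hnu]
    exact Nat.zero_le _

theorem stmt3 (d n a : ℕ) (hd : 1 ≤ d) (hn : 1 ≤ n) (ha : 5 ≤ a)
    (hceil : 2 ^ (a + 3) - 1 ≤ cdiv d a) :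
    congMinusMinusCount d a n ≤ gapCount d a n := by
  have hpow : 2 ^ 8 ≤ 2 ^ (a + 3) := Nat.pow_le_pow_right two_pos (by omega)
  have hmul : 255 * a ≤ d + a - 1 :=
    (Nat.le_div_iff_mul_le (by omega)).1 (le_trans (by omega) hceil)
  exact stmt3_general d n a (by omega) (by omega) (by omega)
end
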